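/- Let K be a field equipped with two commuting ring endomorphisms φ and σ such that every a ∈ K with φ^m(a) = a for some m ≥ 1 satisfies φ(a) = a (K^{φ^∞} = K^φ), and σ maps the subfield k := K^φ onto itself. Let R be a commutative K-algebra with commuting ring endomorphisms Φ and Σ extending φ and σ through the algebra map, such that R is Φ-simple, R is a Φ-pseudo domain, and R is finitely σ-generated over K (R is generated as a K-algebra by {Σ^n(x) | x ∈ T, n ≥ 0} for some finite T ⊆ R). Then the ring of Φ-constants R^Φ = {r ∈ R | Φ(r) = r} satisfies: (1) R^Φ is a field, stable under Σ; (2) R^Φ is finitely σ-generated as a σ-field extension of k: there is a finite set S ⊆ R^Φ such that every element of R^Φ is a quotient a · b^{-1} of elements a, b of the subring of R^Φ generated by the image of k and {Σ^n(s) | s ∈ S, n ≥ 0}; and (3) R^Φ is constrained over k: for every finite tuple c of elements of R^Φ there exists a nonzero b ∈ R^Φ such that the zero ideal is the only σ-pseudo prime ideal (with respect to the restriction of Σ) of the subring of R^Φ generated by the image of k together with {Σ^n(c_j)} for all n ≥ 0 and all coordinates c_j of c and {Σ^n(b^{-1}) | n ≥ 0}. -/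

import Mathlib

/-- A `φ`-ring `R` is `φ`-simple if the zero ideal and the whole ring are its only
`φ`-ideals (ideals `I` with `φ(I) ⊆ I`). -/
def DiffSimple {R : Type*} [CommRing R] (φ : R →+* R) : Prop :=
  (⊥ : Ideal R) ≠ ⊤ ∧ ∀ I : Ideal R, (∀ x ∈ I, φ x ∈ I) → I = ⊥ ∨ I = ⊤

/-- An ideal `p` of a ring with endomorphism `σ` is `σ`-pseudo prime if
`p = q ∩ σ⁻¹(q) ∩ … ∩ σ^{-(d-1)}(q)` for some `d ≥ 1` and some `σ^d`-prime ideal `q`. -/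
def PseudoPrime {R : Type*} [CommRing R] (σ : R →+* R) (p : Ideal R) : Prop :=
  ∃ d : ℕ, 1 ≤ d ∧ ∃ q : Ideal R, q.IsPrime ∧ Ideal.comap (σ ^ d) q = q ∧
    p = ⨅ i ∈ Finset.range d, Ideal.comap (σ ^ i) q

/-- A ring with endomorphism `φ` is a `φ`-pseudo domain if its zero ideal is
`φ`-pseudo prime. -/
def PseudoDomain {R : Type*} [CommRing R] (φ : R →+* R) : Prop :=
  PseudoPrime φ (⊥ : Ideal R)

/-- The subring of `R` generated by the image of `K^φ` together with the `σ'`-orbits of a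
set `gens ⊆ R`. -/
def genSubring {K R : Type*} [CommRing K] [CommRing R] [Algebra K R]
    (φ : K →+* K) (σ' : R →+* R) (gens : Set R) : Subring R :=
  Subring.closure ({z : R | ∃ c : K, φ c = c ∧ algebraMap K R c = z} ∪
    {z : R | ∃ g ∈ gens, ∃ n : ℕ, (⇑σ')^[n] g = z})

/-!
`Φ`-simplicity makes `R^Φ` a field. A minimal prime of `R` is invariant under `Φ^m` and `Σ^e` for
some `m, e ≥ 1`, so these powers act on its residue field `M`, in which `R^Φ` consists of
`Φ^m`-constants and is therefore linearly disjoint from `K` over `k`.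

Finite generation: an intermediate difference field of a finitely generated extension of difference
fields is finitely generated, and by linear disjointness generators of `R^Φ` over `K` already
generate it over `k`.

Constrainedness: let `A ⊆ R^Φ` be generated by `k` and the orbits of a finite tuple. Since `Σ` maps
`k` onto itself, there is a nonzero `b ∈ A` such that every prime `q` of `A` avoiding the orbit of
`b` is dominated by a valuation ring of `M` containing `K` and the orbits of the generators of `R`,
hence `R`. So `q` generates a proper ideal of `R`, which is a `Φ`-ideal because `A` consists of
`Φ`-constants. By `Φ`-simplicity it vanishes, so `q = 0`, and inverting the orbit of `b` leaves no
nonzero primes.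
-/

open Set Polynomial IntermediateField
open scoped TensorProduct

/-- Take an element of minimal support with a coordinate equal to `1`. -/
theorem exists_mem_ne_zero_forall_apply_eq {ι K : Type*} [Field K] (φ : K →+* K)
    (N : Submodule K (ι →₀ K)) (hN : ∀ x ∈ N, x.mapRange φ (map_zero φ) ∈ N) (hne : N ≠ ⊥) :
    ∃ x ∈ N, x ≠ 0 ∧ ∀ i, φ (x i) = x i := by
  classical
  obtain ⟨x, ⟨hxN, hx0⟩, hmin⟩ := exists_minimalFor_of_wellFoundedLT
    (fun x => x ∈ N ∧ x ≠ 0) Finsupp.support (Submodule.exists_mem_ne_zero_of_ne_bot hne)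
  obtain ⟨i, hi⟩ := Finsupp.ne_iff.1 hx0
  set y := (x i)⁻¹ • x
  have hyN : y ∈ N := N.smul_mem _ hxN
  have hyi : y i = 1 := inv_mul_cancel₀ hi
  have hy0 : y ≠ 0 := fun h => by simp [h] at hyi
  have hφy : y.mapRange φ (map_zero φ) = y := by
    by_contra hne
    have hsub : (y.mapRange φ (map_zero φ) - y).support ⊆ x.support := by
      intro j
      contrapose!
      simp +contextual [y]
    have hi' := hmin ⟨N.sub_mem (hN y hyN) hyN, sub_ne_zero.2 hne⟩ hsub
      (Finsupp.mem_support_iff.2 hi)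
    simp [hyi] at hi'
  exact ⟨y, hyN, hy0, DFunLike.congr_fun hφy⟩

theorem exists_comap_pow_eq_of_mem_minimalPrimes {C : Type*} [CommRing C]
    (hfin : (minimalPrimes C).Finite) (ψ : C →+* C) (hψ : Function.Injective ψ)
    {p : Ideal C} (hp : p ∈ minimalPrimes C) :
    ∃ m, 1 ≤ m ∧ p.comap (ψ ^ m) = p := by
  have exists_lift (p : minimalPrimes C) : ∃ q : minimalPrimes C, q.1.comap ψ = p.1 := by
    obtain ⟨q, hq, hqp⟩ :=
      Ideal.exists_comap_eq_of_mem_minimalPrimes_of_injective hψ p.1 p.2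
    obtain ⟨r, hr, hrq⟩ := Ideal.exists_minimalPrimes_le (I := (⊥ : Ideal C)) (J := q) bot_le
    have := hr.1.1
    have hrp : r.comap ψ ≤ p.1 := hqp ▸ Ideal.comap_mono hrq
    exact ⟨⟨r, hr⟩, hrp.antisymm (p.2.2 ⟨Ideal.comap_isPrime ψ r, bot_le⟩ hrp)⟩
  choose g hg using exists_lift
  have hginj : Function.Injective g := fun a b h => Subtype.ext (by rw [← hg a, ← hg b, h])
  have comap_iterate (n : ℕ) (a : minimalPrimes C) : (g^[n] a).1.comap (ψ ^ n) = a.1 := by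
    induction n generalizing a with
    | zero => exact Ideal.comap_id a.1
    | succ n ih =>
      rw [Function.iterate_succ_apply, pow_succ, RingHom.mul_def, ← Ideal.comap_comap, ih, hg]
  have : Finite (minimalPrimes C) := hfin
  obtain ⟨m, hm, hper⟩ := hginj.mem_periodicPts ⟨p, hp⟩
  refine ⟨m, hm, ?_⟩
  simpa only [hper.eq] using comap_iterate m ⟨p, hp⟩

section TensorProduct

variable {k K A : Type*} [Field k] [Field K] [Algebra k K] [CommRing A] [Algebra k A]

theorem basis_repr_map_id {ι : Type*} (b : Module.Basis ι k A) (φ : K →ₐ[k] K) (x : K ⊗[k] A) :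
    (Algebra.TensorProduct.basis K b).repr (Algebra.TensorProduct.map φ (AlgHom.id k A) x) =
      ((Algebra.TensorProduct.basis K b).repr x).mapRange φ (map_zero φ) := by
  induction x with
  | zero => simp
  | tmul a m => ext; simp [Algebra.TensorProduct.basis_repr_tmul]
  | add x y hx hy => simp [hx, hy, Finsupp.mapRange_add]

theorem exists_one_tmul_eq_of_map_eq (φ : K →ₐ[k] K)
    (hfix : ∀ a, φ a = a → a ∈ Set.range (algebraMap k K)) {x : K ⊗[k] A}
    (hx : Algebra.TensorProduct.map φ (AlgHom.id k A) x = x) : ∃ a : A, 1 ⊗ₜ a = x := by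
  set b := Module.Basis.ofVectorSpace k A
  set e := (Algebra.TensorProduct.basis K b).repr
  obtain ⟨r, hr⟩ : e x ∈ Set.range (Finsupp.mapRange (algebraMap k K) (map_zero _)) := by
    rw [Finsupp.range_mapRange]
    exact fun i => hfix _ (DFunLike.congr_fun (hx ▸ basis_repr_map_id b φ x).symm i)
  exact ⟨b.repr.symm r, e.injective (by simp [e, Algebra.TensorProduct.basis_repr_tmul, ← hr])⟩

theorem exists_one_tmul_mem_of_forall_map_mem (φ : K →ₐ[k] K)
    (hfix : ∀ a, φ a = a → a ∈ Set.range (algebraMap k K)) (I : Ideal (K ⊗[k] A))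
    (hI : ∀ x ∈ I, Algebra.TensorProduct.map φ (AlgHom.id k A) x ∈ I) (hne : I ≠ ⊥) :
    ∃ a : A, a ≠ 0 ∧ (1 : K) ⊗ₜ[k] a ∈ I := by
  set b := Module.Basis.ofVectorSpace k A
  set e := (Algebra.TensorProduct.basis K b).repr
  obtain ⟨_, ⟨x, hx, rfl⟩, hx0, hfixx⟩ := exists_mem_ne_zero_forall_apply_eq φ
    ((I.restrictScalars K).map e.toLinearMap)
    (by
      rintro _ ⟨x, hx, rfl⟩
      exact ⟨_, hI x hx, basis_repr_map_id b φ x⟩)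
    (by simpa using hne)
  obtain ⟨a, rfl⟩ := exists_one_tmul_eq_of_map_eq φ hfix
    (e.injective ((basis_repr_map_id b φ x).trans (Finsupp.ext hfixx)))
  exact ⟨a, by rintro rfl; simp at hx0, hx⟩

section Constants

variable {M : Type*} [CommRing M] [Algebra K M] [Algebra k M] [IsScalarTower k K M]

theorem productMap_map_of_fixed (φ : K →ₐ[k] K) (ψ : M →+* M)
    (hψ : ∀ a, ψ (algebraMap K M a) = algebraMap K M (φ a)) (j : A →ₐ[k] M)
    (hj : ∀ a, ψ (j a) = j a) (x : K ⊗[k] A) :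
    Algebra.TensorProduct.productMap (IsScalarTower.toAlgHom k K M) j
      (Algebra.TensorProduct.map φ (AlgHom.id k A) x) =
      ψ (Algebra.TensorProduct.productMap (IsScalarTower.toAlgHom k K M) j x) := by
  induction x with
  | zero => simp
  | tmul u v => simp [hψ, hj]
  | add x y hx hy => simp [hx, hy]

theorem productMap_injective_of_fixed (φ : K →ₐ[k] K)
    (hfix : ∀ a, φ a = a → a ∈ Set.range (algebraMap k K)) (ψ : M →+* M)
    (hψ : ∀ a, ψ (algebraMap K M a) = algebraMap K M (φ a)) (j : A →ₐ[k] M)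
    (hj : ∀ a, ψ (j a) = j a) (hinj : Function.Injective j) :
    Function.Injective
      (Algebra.TensorProduct.productMap (IsScalarTower.toAlgHom k K M) j) := by
  set π := Algebra.TensorProduct.productMap (IsScalarTower.toAlgHom k K M) j
  refine (RingHom.injective_iff_ker_eq_bot π).2 (by_contra fun hne => ?_)
  obtain ⟨a, ha, haπ⟩ := exists_one_tmul_mem_of_forall_map_mem φ hfix (RingHom.ker π)
    (fun x hx => by
      rw [RingHom.mem_ker] at hx ⊢
      rw [productMap_map_of_fixed φ ψ hψ j hj, hx, map_zero]) hne
  exact ha ((map_eq_zero_iff j hinj).1 (by simpa [π, RingHom.mem_ker] using haπ))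

end Constants

theorem exists_productMap_eq_of_mem_closure {M : Type*} [Field M] [Algebra K M] [Algebra k M]
    [IsScalarTower k K M] (E : IntermediateField k M) {x : M}
    (hx : x ∈ Subring.closure (E ∪ Set.range (algebraMap K M))) :
    ∃ w, Algebra.TensorProduct.productMap (IsScalarTower.toAlgHom k K M) E.val w = x := by
  set π := Algebra.TensorProduct.productMap (IsScalarTower.toAlgHom k K M) E.val
  suffices Subring.closure (E ∪ Set.range (algebraMap K M)) ≤ π.range.toSubring from this hx
  refine Subring.closure_le.2 (Set.union_subset (fun a ha => ⟨1 ⊗ₜ ⟨a, ha⟩, by simp [π]⟩) ?_)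
  rintro _ ⟨a, rfl⟩
  exact ⟨a ⊗ₜ 1, by simp [π]⟩

/-- If `x = y / u` with `u`, `y` in the subring generated by `K` and `E`, then the `u` for which
`x * u` is again in that subring form a stable ideal, which contains an element of `E`. -/
theorem mem_of_mem_closure_union_of_fixed {M : Type*} [Field M] [Algebra K M] [Algebra k M]
    [IsScalarTower k K M] (φ : K →ₐ[k] K)
    (hfix : ∀ a, φ a = a → a ∈ Set.range (algebraMap k K)) (ψ : M →+* M)
    (hψ : ∀ a, ψ (algebraMap K M a) = algebraMap K M (φ a)) {E : IntermediateField k M}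
    (hE : ∀ a ∈ E, ψ a = a) {x : M} (hψx : ψ x = x)
    (hx : x ∈ Subfield.closure (E ∪ Set.range (algebraMap K M))) : x ∈ E := by
  set π := Algebra.TensorProduct.productMap (IsScalarTower.toAlgHom k K M) E.val
  have hEψ (a : E) : ψ (E.val a) = E.val a := hE a a.2
  have hπ : Function.Injective π := productMap_injective_of_fixed φ hfix ψ hψ E.val hEψ
    Subtype.val_injective
  have hπφ (u) : π (Algebra.TensorProduct.map φ (AlgHom.id k E) u) = ψ (π u) :=
    productMap_map_of_fixed φ ψ hψ E.val hEψ u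
  let I : Ideal (K ⊗[k] E) :=
    { carrier := {u | ∃ y, π y = x * π u}
      zero_mem' := ⟨0, by simp⟩
      add_mem' := fun ⟨y, hy⟩ ⟨z, hz⟩ => ⟨y + z, by simp [hy, hz, mul_add]⟩
      smul_mem' := fun c _ ⟨y, hy⟩ => ⟨c * y, by simp [hy, mul_left_comm]⟩ }
  have hI : I ≠ ⊥ := by
    obtain ⟨y, hy, u, hu, rfl⟩ := Subfield.mem_closure_iff.1 hx
    obtain ⟨y, rfl⟩ := exists_productMap_eq_of_mem_closure E hy
    obtain ⟨u, rfl⟩ := exists_productMap_eq_of_mem_closure E hu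
    obtain hu0 | hu0 := eq_or_ne (π u) 0
    · exact (Submodule.ne_bot_iff I).2 ⟨1, ⟨0, by simp [π, hu0]⟩, one_ne_zero⟩
    · exact (Submodule.ne_bot_iff I).2 ⟨u, ⟨y, (div_mul_cancel₀ _ hu0).symm⟩, by aesop⟩
  obtain ⟨a, ha0, w, hw⟩ := exists_one_tmul_mem_of_forall_map_mem φ hfix I
    (fun u ⟨y, hy⟩ => ⟨Algebra.TensorProduct.map φ (AlgHom.id k E) y, by
      rw [hπφ, hπφ, hy, map_mul, hψx]⟩) hI
  have hwa : π w = x * a := by simpa [π] using hw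
  obtain ⟨e, rfl⟩ := exists_one_tmul_eq_of_map_eq φ hfix
    (hπ (by rw [hπφ, hwa, map_mul, hψx, hE a a.2]) :
      Algebra.TensorProduct.map φ (AlgHom.id k E) w = w)
  have hxe : x = e / a := by
    rw [eq_div_iff (by simpa using ha0), ← hwa]
    simp [π]
  exact hxe ▸ div_mem e.2 a.2

theorem one_tmul_mem_nonZeroDivisors [IsDomain A] {a : A} (ha : a ≠ 0) :
    (1 : K) ⊗ₜ[k] a ∈ nonZeroDivisors (K ⊗[k] A) := by
  have hinj := Module.Flat.lTensor_preserves_injective_linearMap (M := K) (LinearMap.mulLeft k a)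
    (mul_right_injective₀ ha)
  have hmul (x : K ⊗[k] A) : (LinearMap.mulLeft k a).lTensor K x = 1 ⊗ₜ a * x := by
    induction x with
    | zero => simp
    | tmul u v => simp
    | add x y hx hy => simp [mul_add, hx, hy]
  exact mem_nonZeroDivisors_iff_left.2 fun x hx => hinj (by rw [hmul, hx, map_zero])

theorem isDomain_tensorProduct_of_finiteType [IsDomain A] [Algebra.FiniteType k A]
    (φ : K →ₐ[k] K)
    (hfix : ∀ (m : ℕ) a, 1 ≤ m → (φ ^ m) a = a → a ∈ Set.range (algebraMap k K)) :
    IsDomain (K ⊗[k] A) := by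
  have : IsNoetherianRing (K ⊗[k] A) := Algebra.FiniteType.isNoetherianRing K _
  set ψ := Algebra.TensorProduct.map φ (AlgHom.id k A)
  have hψpow (m : ℕ) : ψ ^ m = Algebra.TensorProduct.map (φ ^ m) (AlgHom.id k A) := by
    induction m with
    | zero => exact Algebra.TensorProduct.map_id.symm
    | succ n ih =>
      rw [pow_succ, ih]
      ext <;> simp [ψ, pow_succ]
  have hψ : Function.Injective ψ :=
    Module.Flat.rTensor_preserves_injective_linearMap φ.toLinearMap φ.toRingHom.injective
  obtain ⟨p, hp⟩ := Ideal.nonempty_minimalPrimes (I := (⊥ : Ideal (K ⊗[k] A))) bot_ne_top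
  obtain ⟨m, hm, hpm⟩ := exists_comap_pow_eq_of_mem_minimalPrimes
    (minimalPrimes.finite_of_isNoetherianRing _) ψ.toRingHom hψ hp
  suffices hp0 : p = ⊥ by
    have := hp.1.1
    rw [hp0] at this
    exact IsDomain.of_bot_isPrime _
  by_contra hne
  obtain ⟨a, ha, hap⟩ := exists_one_tmul_mem_of_forall_map_mem (φ ^ m) (hfix m · hm) p
    (fun x hx => by
      rw [← hpm] at hx
      simpa [← hψpow, RingHom.coe_pow, AlgHom.coe_pow] using hx) hne
  exact Set.disjoint_left.1 (Ideal.disjoint_nonZeroDivisors_of_mem_minimalPrimes hp) hap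
    (one_tmul_mem_nonZeroDivisors ha)

theorem isDomain_tensorProduct_of_fixed [IsDomain A] (φ : K →ₐ[k] K)
    (hfix : ∀ (m : ℕ) a, 1 ≤ m → (φ ^ m) a = a → a ∈ Set.range (algebraMap k K)) :
    IsDomain (K ⊗[k] A) := by
  have : NoZeroDivisors (K ⊗[k] A) := by
    refine ⟨fun {x y} hxy => ?_⟩
    obtain ⟨N, hN, hxyN⟩ :=
      TensorProduct.exists_finite_submodule_right_of_setFinite {x, y} (Set.toFinite _)
    obtain ⟨s, rfl⟩ := Module.Finite.iff_fg.1 hN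
    set F := Algebra.adjoin k (s : Set A)
    have : Algebra.FiniteType k F := F.fg_iff_finiteType.1 ⟨s, rfl⟩
    have := isDomain_tensorProduct_of_finiteType (A := F) φ hfix
    set ι := Algebra.TensorProduct.map (AlgHom.id k K) F.val
    have hι : Function.Injective ι :=
      Module.Flat.lTensor_preserves_injective_linearMap (M := K) F.val.toLinearMap
        Subtype.val_injective
    have hrange : {x, y} ⊆ Set.range ι := by
      refine hxyN.trans (?_ : LinearMap.range _ ≤ LinearMap.range ι.toLinearMap)
      rw [← Submodule.subtype_comp_inclusion _ _ (Algebra.span_le_adjoin k (s : Set A)),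
        LinearMap.lTensor_comp]
      exact LinearMap.range_comp_le_range _ _
    obtain ⟨x, rfl⟩ := hrange (by simp : x ∈ _)
    obtain ⟨y, rfl⟩ := hrange (by simp : y ∈ _)
    rw [← map_mul, map_eq_zero_iff _ hι, mul_eq_zero] at hxy
    exact hxy.imp (by simp +contextual) (by simp +contextual)
  exact NoZeroDivisors.to_isDomain _

end TensorProduct

/-- The union of the forward orbits of the points of `S` under `f`. -/
def forwardOrbit {X : Type*} (f : X → X) (S : Set X) : Set X :=
  {x | ∃ s ∈ S, ∃ n : ℕ, f^[n] s = x}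

namespace forwardOrbit

variable {X : Type*} {f : X → X} {S T : Set X}

theorem mono (h : S ⊆ T) : forwardOrbit f S ⊆ forwardOrbit f T :=
  fun _ ⟨s, hs, n, hn⟩ => ⟨s, h hs, n, hn⟩

theorem subset : S ⊆ forwardOrbit f S := fun s hs => ⟨s, hs, 0, rfl⟩

theorem mapsTo : MapsTo f (forwardOrbit f S) (forwardOrbit f S) :=
  fun _ ⟨s, hs, n, hn⟩ => ⟨s, hs, n + 1, by rw [Function.iterate_succ_apply', hn]⟩

theorem subset_of_mapsTo (hT : MapsTo f T T) (h : S ⊆ T) : forwardOrbit f S ⊆ T := by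
  rintro _ ⟨s, hs, n, rfl⟩
  exact hT.iterate n (h hs)

theorem image {Y : Type*} {g : Y → Y} {h : X → Y} (hfg : Function.Semiconj h f g) (S : Set X) :
    forwardOrbit g (h '' S) = h '' forwardOrbit f S := by
  ext y
  constructor
  · rintro ⟨_, ⟨s, hs, rfl⟩, n, rfl⟩
    exact ⟨_, ⟨s, hs, n, rfl⟩, hfg.iterate_right n s⟩
  · rintro ⟨_, ⟨s, hs, n, rfl⟩, rfl⟩
    exact ⟨_, ⟨s, hs, rfl⟩, n, (hfg.iterate_right n s).symm⟩

theorem exists_subset_range [Nonempty X] (f : X → X) (hT : T.Finite) :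
    ∃ (w : ℕ → X) (N : ℕ), 1 ≤ N ∧ (∀ j, f (w j) = w (j + N)) ∧ forwardOrbit f T ⊆ range w := by
  obtain ⟨N, g, -, rfl⟩ := hT.fin_param
  let g' : ℕ → X := Function.extend Fin.val g fun _ => Classical.arbitrary X
  refine ⟨fun j => f^[j / (N + 1)] (g' (j % (N + 1))), N + 1, N.succ_pos, fun j => ?_, ?_⟩
  · simp only [Nat.add_mod_right, Nat.add_div_right j N.succ_pos, Function.iterate_succ_apply']
  · rintro _ ⟨_, ⟨i, rfl⟩, n, rfl⟩
    have hi : (i : ℕ) < N + 1 := i.2.trans N.lt_succ_self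
    refine ⟨i + (N + 1) * n, ?_⟩
    simp only [Nat.add_mul_div_left _ _ N.succ_pos, Nat.div_eq_of_lt hi, Nat.add_mul_mod_self_left,
      Nat.mod_eq_of_lt hi, zero_add, g', Fin.val_injective.extend_apply]

end forwardOrbit

theorem exists_forall_add_eq_of_forall_add_le {α : Type*} [PartialOrder α] [WellFoundedLT α]
    (μ : ℕ → α) {P : ℕ} (hP : 1 ≤ P) (hμ : ∀ j, μ (j + P) ≤ μ j) :
    ∃ N, ∀ j, N ≤ j → μ (j + P) = μ j := by
  have hanti (r : ℕ) : Antitone fun i => μ (r + i * P) :=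
    antitone_nat_of_succ_le fun i => by simpa only [add_one_mul, add_assoc] using hμ (r + i * P)
  choose n hn using fun r => wellFoundedGT_iff_monotone_chain_condition.1
    (inferInstance : WellFoundedGT αᵒᵈ) ⟨_, (hanti r).dual_right⟩
  refine ⟨(Finset.range P).sup n * P + P, fun j hj => ?_⟩
  have hnj : n (j % P) ≤ j / P :=
    (Finset.le_sup (Finset.mem_range.2 (Nat.mod_lt j hP))).trans
      ((Nat.le_div_iff_mul_le hP).2 (by omega))
  have hj' : j % P + j / P * P = j := by rw [mul_comm]; exact Nat.mod_add_div j P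
  have h₁ : μ (j % P + n (j % P) * P) = μ (j % P + j / P * P) := hn _ _ hnj
  have h₂ : μ (j % P + n (j % P) * P) = μ (j % P + (j / P + 1) * P) := hn _ _ (by omega)
  rwa [h₁, add_one_mul, ← add_assoc, hj', eq_comm] at h₂

section DegreeOver

variable {F M : Type*} [Field F] [Field M] [Algebra F M]

open Classical in
/-- The degree of `z` over the field `F`, equal to `⊤` when `z` is transcendental. -/
noncomputable def degreeOver (F : Type*) {M : Type*} [Field F] [Field M] [Algebra F M] (z : M) :
    ℕ∞ :=
  if IsIntegral F z then (minpoly F z).natDegree else ⊤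

variable {F' M' : Type*} [Field F'] [Field M'] [Algebra F' M'] (f : F →+* F') (τ : M →+* M')

theorem aeval_map_minpoly (h : (algebraMap F' M').comp f = τ.comp (algebraMap F M)) (z : M) :
    aeval (τ z) ((minpoly F z).map f) = 0 := by
  rw [aeval_def, eval₂_map, h, ← hom_eval₂, ← aeval_def, minpoly.aeval, map_zero]

theorem degreeOver_map_le (h : (algebraMap F' M').comp f = τ.comp (algebraMap F M)) (z : M) :
    degreeOver F' (τ z) ≤ degreeOver F z := by
  by_cases hz : IsIntegral F z
  · have hz' : IsIntegral F' (τ z) :=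
      ⟨_, (minpoly.monic hz).map f, aeval_map_minpoly f τ h z⟩
    rw [degreeOver, degreeOver, if_pos hz, if_pos hz', Nat.cast_le, ← natDegree_map f]
    exact natDegree_le_of_dvd (minpoly.dvd _ _ (aeval_map_minpoly f τ h z))
      ((minpoly.monic hz).map f).ne_zero
  · simp [degreeOver, hz]

theorem minpoly_map_of_degreeOver_eq (h : (algebraMap F' M').comp f = τ.comp (algebraMap F M))
    {z : M} (hz : degreeOver F' (τ z) = degreeOver F z) :
    minpoly F' (τ z) = (minpoly F z).map f := by
  by_cases hz₁ : IsIntegral F z <;> by_cases hz₂ : IsIntegral F' (τ z) <;>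
    simp only [degreeOver, hz₁, hz₂, if_true, if_false, Nat.cast_inj, ENat.natCast_ne_top,
      ENat.top_ne_natCast] at hz
  · refine (eq_of_monic_of_dvd_of_natDegree_le (minpoly.monic hz₂) ((minpoly.monic hz₁).map f)
      (minpoly.dvd _ _ (aeval_map_minpoly f τ h z)) ?_).symm
    rw [natDegree_map, hz]
  · rw [minpoly.eq_zero hz₁, minpoly.eq_zero hz₂, Polynomial.map_zero]

end DegreeOver

theorem modByMonic_minpoly_eq_zero {F M : Type*} [Field F] [Field M] [Algebra F M] {z : M}
    {r : F[X]} (hr : aeval z r = 0) : r %ₘ minpoly F z = 0 := by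
  by_cases hz : IsIntegral F z
  · exact (modByMonic_eq_zero_iff_dvd (minpoly.monic hz)).2 (minpoly.dvd _ _ hr)
  · rw [minpoly.eq_zero hz, modByMonic_zero]
    exact (transcendental_iff.1 (fun h => hz h.isIntegral)) r hr

/-- Reduce a fraction `r(z) / s(z) = x` modulo the minimal polynomial and compare coefficients in
`x * s(z) = r(z)`.  When `z` is transcendental, `minpoly F z = 0` and nothing is reduced. -/
theorem mem_range_algebraMap_of_mem_adjoin_simple {E F M : Type*} [Field E] [Field F] [Field M]
    [Algebra E F] [Algebra F M] [Algebra E M] [IsScalarTower E F M] {z : M}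
    (hz : minpoly F z ∈ lifts (algebraMap E F)) {x : F} (hx : algebraMap F M x ∈ E⟮z⟯) :
    x ∈ Set.range (algebraMap E F) := by
  obtain ⟨q, hq⟩ := (mem_lifts _).1 hz
  have map_mod (t : E[X]) : (t %ₘ q).map (algebraMap E F) =
      t.map (algebraMap E F) %ₘ minpoly F z := by
    by_cases hz' : IsIntegral F z
    · rw [← hq, map_modByMonic _ (monic_of_injective (algebraMap E F).injective
        (hq ▸ minpoly.monic hz'))]
    · have hq0 : q = 0 := by
        rwa [minpoly.eq_zero hz', Polynomial.map_eq_zero] at hq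
      rw [minpoly.eq_zero hz', hq0, modByMonic_zero, modByMonic_zero]
  obtain ⟨r, s, hrs⟩ := (mem_adjoin_simple_iff E _).1 hx
  obtain hs | hs := eq_or_ne (aeval z s) 0
  · rw [hs, div_zero, map_eq_zero] at hrs
    exact ⟨0, by simp [hrs]⟩
  rw [eq_div_iff hs] at hrs
  have hmod : x • (s %ₘ q).map (algebraMap E F) = (r %ₘ q).map (algebraMap E F) := by
    rw [map_mod, map_mod, ← smul_modByMonic, ← sub_eq_zero, ← sub_modByMonic]
    exact modByMonic_minpoly_eq_zero (by simp [Algebra.smul_def, hrs])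
  obtain ⟨i, hi⟩ : ∃ i, (s %ₘ q).coeff i ≠ 0 := by
    by_contra! h
    have hq0 : s %ₘ q = 0 := Polynomial.ext h
    rw [← aeval_map_algebraMap F, ← minpoly.aeval_modByMonic_minpoly, ← map_mod, hq0,
      Polynomial.map_zero, map_zero] at hs
    exact hs rfl
  have hcoeff := congr_arg (coeff · i) hmod
  simp only [coeff_smul, coeff_map, smul_eq_mul] at hcoeff
  exact ⟨(r %ₘ q).coeff i / (s %ₘ q).coeff i, by
    rw [map_div₀, ← hcoeff, mul_div_cancel_right₀ _ (by simpa using hi)]⟩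

theorem mem_adjoin_subfield_iff {M : Type*} [Field M] {E : Subfield M} {S : Set M} {x : M} :
    x ∈ adjoin E S ↔ x ∈ E ⊔ Subfield.closure S := by
  rw [← mem_toSubfield, adjoin_toSubfield, Subfield.closure_union,
    show range (algebraMap E M) = E from Subtype.range_coe, Subfield.closure_eq]

theorem mem_of_mem_sup_closure_singleton {M : Type*} [Field M] {E F : Subfield M} (hEF : E ≤ F)
    {z x : M} (hz : ∀ i, ((minpoly F z).coeff i : M) ∈ E) (hxF : x ∈ F)
    (hx : x ∈ E ⊔ Subfield.closure {z}) : x ∈ E := by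
  let : Algebra E F := (Subfield.inclusion hEF).toAlgebra
  have : IsScalarTower E F M := IsScalarTower.of_algebraMap_eq fun _ => rfl
  obtain ⟨y, hy⟩ := mem_range_algebraMap_of_mem_adjoin_simple (E := E) (z := z) (x := ⟨x, hxF⟩)
    ((lifts_iff_coeff_lifts _).2 fun i => ⟨⟨_, hz i⟩, Subtype.ext rfl⟩)
    (by rwa [mem_adjoin_subfield_iff])
  rw [← show (y : M) = x from congr_arg Subtype.val hy]
  exact y.2

theorem exists_forall_coeff_minpoly_eq {M : Type*} [Field M] (τ : M →+* M) (F : ℕ → Subfield M)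
    (z : ℕ → M) {P : ℕ} (hP : 1 ≤ P) (hF : ∀ j, F j ≤ (F (j + P)).comap τ)
    (hz : ∀ j, τ (z j) = z (j + P)) :
    ∃ N, ∀ j, N ≤ j → ∀ i, ((minpoly (F (j + P)) (z (j + P))).coeff i : M) =
      τ ((minpoly (F j) (z j)).coeff i) := by
  have hcomm (j : ℕ) : (algebraMap (F (j + P)) M).comp
      ((τ.comp (F j).subtype).codRestrict (F (j + P)) fun a => hF j a.2) =
      τ.comp (algebraMap (F j) M) := rfl
  obtain ⟨N, hN⟩ := exists_forall_add_eq_of_forall_add_le (fun j => degreeOver (F j) (z j)) hP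
    fun j => by simpa only [hz] using degreeOver_map_le _ τ (hcomm j) (z j)
  refine ⟨N, fun j hj i => ?_⟩
  rw [← hz, minpoly_map_of_degreeOver_eq _ τ (hcomm j) (by simpa only [hz] using hN j hj),
    coeff_map]
  rfl

theorem exists_finset_mem_closure_sup {M : Type*} [Field M] {L G : Subfield M} {x : M}
    (hx : x ∈ L ⊔ G) : ∃ T : Finset M, (T : Set M) ⊆ L ∧ x ∈ Subfield.closure (T : Set M) ⊔ G := by
  simp_rw [sup_comm, ← mem_adjoin_subfield_iff]
  refine exists_finset_of_mem_adjoin ?_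
  rwa [mem_adjoin_subfield_iff, Subfield.closure_eq, sup_comm]

theorem exists_finset_forall_coeff_mem {M : Type*} [Field M] {L G : Subfield M}
    (p : (L ⊔ G : Subfield M)[X]) :
    ∃ T : Finset M, (T : Set M) ⊆ L ∧
      ∀ i, (p.coeff i : M) ∈ Subfield.closure (T : Set M) ⊔ G := by
  classical
  choose T hTL hT using fun i => exists_finset_mem_closure_sup (p.coeff i).2
  refine ⟨p.support.biUnion T, by simpa using fun i _ => hTL i, fun i => ?_⟩
  by_cases hi : i ∈ p.support
  · refine sup_le_sup_right (Subfield.closure_mono ?_) G (hT i)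
    exact_mod_cast Finset.subset_biUnion_of_mem T hi
  · rw [notMem_support_iff.1 hi]
    exact zero_mem _

/-- The subfield generated over `K` by the first `j` terms of the sequence `z`. -/
def adjoinInitial {M : Type*} [Field M] (K : Subfield M) (z : ℕ → M) (j : ℕ) : Subfield M :=
  K ⊔ Subfield.closure (z '' Iio j)

namespace adjoinInitial

variable {M : Type*} [Field M] {K : Subfield M} {z : ℕ → M}

theorem zero : adjoinInitial K z 0 = K := by
  simp [adjoinInitial]

theorem succ (j : ℕ) :
    adjoinInitial K z (j + 1) = adjoinInitial K z j ⊔ Subfield.closure {z j} := by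
  rw [adjoinInitial, adjoinInitial, sup_assoc, ← Subfield.closure_union,
    ← Order.succ_eq_add_one, Order.Iio_succ_eq_insert, image_insert_eq, union_singleton]

theorem exists_mem {x : M} (hx : x ∈ K ⊔ Subfield.closure (range z)) :
    ∃ j, x ∈ adjoinInitial K z j := by
  have hmono : Monotone (adjoinInitial K z) := fun i j hij =>
    sup_le_sup_left (Subfield.closure_mono (image_mono (Iio_subset_Iio hij))) K
  rw [← Subfield.mem_iSup_of_directed hmono.directed_le]
  refine sup_le (zero.ge.trans (le_iSup _ 0)) (Subfield.closure_le.2 ?_) hx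
  rintro _ ⟨j, rfl⟩
  have hj : z j ∈ adjoinInitial K z (j + 1) :=
    le_sup_right (a := K) (Subfield.subset_closure ⟨j, j.lt_succ_self, rfl⟩)
  exact le_iSup (adjoinInitial K z) (j + 1) hj

theorem le_comap (τ : M →+* M) {P : ℕ} (hK : K ≤ K.comap τ) (hz : ∀ j, τ (z j) = z (j + P))
    (j : ℕ) : adjoinInitial K z j ≤ (adjoinInitial K z (j + P)).comap τ := by
  refine sup_le (hK.trans fun _ h => le_sup_left (a := K) h) (Subfield.closure_le.2 ?_)
  rintro _ ⟨i, hi, rfl⟩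
  exact le_sup_right (a := K)
    (Subfield.subset_closure ⟨i + P, Nat.add_lt_add_right hi P, (hz i).symm⟩)

theorem mem_sup_of_forall_coeff_minpoly_mem {E L : Subfield M} (hE : E ≤ L)
    (hcoeff : ∀ j i, ((minpoly (L ⊔ adjoinInitial K z j : Subfield M) (z j)).coeff i : M) ∈
      E ⊔ adjoinInitial K z j) {x : M} (hxL : x ∈ L)
    (hx : x ∈ K ⊔ Subfield.closure (range z)) : x ∈ E ⊔ K := by
  have descent (j : ℕ) (h : x ∈ E ⊔ adjoinInitial K z j) : x ∈ E ⊔ K := by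
    induction j with
    | zero => rwa [zero] at h
    | succ j ih =>
      rw [succ, ← sup_assoc] at h
      exact ih (mem_of_mem_sup_closure_singleton (sup_le_sup_right hE _) (hcoeff j)
        (le_sup_left (a := L) hxL) h)
  obtain ⟨j, hj⟩ := exists_mem hx
  exact descent j (le_sup_right (a := E) hj)

end adjoinInitial

/-- The minimal polynomials of the `z j` over `L` and the previous terms are eventually carried
along by `τ`, so their coefficients only involve finitely many orbits in `L`. -/
theorem exists_finset_le_closure_forwardOrbit_sup {M : Type*} [Field M] (τ : M →+* M)
    {K L : Subfield M} (hK : K ≤ K.comap τ) (hL : L ≤ L.comap τ) {z : ℕ → M} {P : ℕ} (hP : 1 ≤ P)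
    (hz : ∀ j, τ (z j) = z (j + P)) (hLz : L ≤ K ⊔ Subfield.closure (range z)) :
    ∃ T : Finset M, (T : Set M) ⊆ L ∧ L ≤ Subfield.closure (forwardOrbit τ T) ⊔ K := by
  classical
  have le_comap {D : Subfield M} (hD : D ≤ D.comap τ) (j : ℕ) :
      D ⊔ adjoinInitial K z j ≤ (D ⊔ adjoinInitial K z (j + P)).comap τ :=
    sup_le (hD.trans fun _ h => le_sup_left (a := D) h)
      ((adjoinInitial.le_comap τ hK hz j).trans fun _ h => le_sup_right (a := D) h)
  obtain ⟨N, hN⟩ := exists_forall_coeff_minpoly_eq τ _ z hP (le_comap hL) hz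
  choose T hTL hT using fun j =>
    exists_finset_forall_coeff_mem (minpoly (L ⊔ adjoinInitial K z j : Subfield M) (z j))
  set S := (Finset.range (N + P)).biUnion T
  have hSL : (S : Set M) ⊆ L := by simpa [S] using fun j _ => hTL j
  set E := Subfield.closure (forwardOrbit τ (S : Set M))
  have hE : E ≤ E.comap τ :=
    Subfield.closure_le.2 fun x hx => Subfield.subset_closure (forwardOrbit.mapsTo hx)
  have hcoeff (j : ℕ) : ∀ i, ((minpoly (L ⊔ adjoinInitial K z j : Subfield M) (z j)).coeff i : M) ∈
      E ⊔ adjoinInitial K z j := by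
    induction j using Nat.strong_induction_on with
    | h j ih =>
      intro i
      obtain hj | hj := lt_or_ge j (N + P)
      · refine sup_le_sup_right (Subfield.closure_mono (subset_trans ?_ forwardOrbit.subset)) _
          (hT j i)
        exact_mod_cast Finset.subset_biUnion_of_mem T (Finset.mem_range.2 hj)
      · obtain ⟨j, rfl⟩ := Nat.exists_eq_add_of_le' ((Nat.le_add_left P N).trans hj)
        rw [hN j (by omega)]
        exact le_comap hE j (ih j (by omega) i)
  exact ⟨S, hSL, fun x hx => adjoinInitial.mem_sup_of_forall_coeff_minpoly_mem
    (Subfield.closure_le.2 (forwardOrbit.subset_of_mapsTo hL hSL)) hcoeff hx (hLz hx)⟩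

/-- The indices at which the sequence `w` is not spanned by its previous terms. -/
def newIndices {M : Type*} (m : Matroid M) (w : ℕ → M) : Set ℕ :=
  {j | w j ∉ m.closure (w '' Iio j)}

namespace newIndices

variable {M : Type*} {m : Matroid M} {w : ℕ → M}

theorem indep_image [m.Finitary] (hw : ∀ j, w j ∈ m.E) : m.Indep (w '' newIndices m w) := by
  have indep_initial (n : ℕ) : m.Indep (w '' (newIndices m w ∩ Iio n)) := by
    induction n with
    | zero => simp
    | succ n ih =>
      rw [← Order.succ_eq_add_one, Order.Iio_succ_eq_insert]
      by_cases hn : n ∈ newIndices m w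
      · rw [inter_insert_of_mem hn, image_insert_eq, Matroid.insert_indep_iff]
        exact ⟨ih, fun _ =>
          ⟨hw n, fun h => hn (m.closure_subset_closure (image_mono inter_subset_right) h)⟩⟩
      · rwa [inter_insert_of_notMem hn]
  refine Matroid.indep_of_forall_finite_subset_indep _ fun J hJ hfin => ?_
  obtain ⟨I, hI, hIfin, rfl⟩ := exists_subset_image_finite_and.1 ⟨J, hJ, hfin, (Eq.refl J)⟩
  obtain ⟨n, hn⟩ := hIfin.bddAbove
  exact (indep_initial (n + 1)).subset
    (image_mono fun j hj => ⟨hI hj, Nat.lt_succ_of_le (hn hj)⟩)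

theorem mem_closure_image (hw : ∀ j, w j ∈ m.E) (j : ℕ) :
    w j ∈ m.closure (w '' newIndices m w) := by
  induction j using Nat.strong_induction_on with
  | h j ih =>
    by_cases hj : j ∈ newIndices m w
    · exact m.mem_closure_of_mem' (mem_image_of_mem w hj) (hw j)
    · exact m.closure_subset_closure_of_subset_closure (image_subset_iff.2 ih) (not_not.1 hj)

end newIndices

theorem exists_succ_eq_and_forall_add_mem {A : ℕ → Set ℕ} (hA : Antitone A) {P : ℕ} (hP : 1 ≤ P)
    (hAP : ∀ i j, j + P ∈ A i → j ∈ A (i + 1)) :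
    ∃ i N, A (i + 1) = A i ∧ ∀ j, N ≤ j → j ∈ A i → j + P ∈ A i := by
  obtain ⟨N, hN⟩ := exists_forall_add_eq_of_forall_add_le (fun j => j ∈ A 0) hP
    fun j hj => hA (Nat.zero_le _) (hAP 0 j hj)
  have mem_of_mem_zero (i : ℕ) : ∀ j, N ≤ j → j ∈ A 0 → j ∈ A i := by
    induction i with
    | zero => exact fun _ _ => id
    | succ i ih => exact fun j hj h => hAP i j (ih _ (by omega) ((hN j hj).mpr h))
  obtain ⟨i, hi⟩ := wellFoundedGT_iff_monotone_chain_condition.1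
    (inferInstance : WellFoundedGT (Set (Fin N))ᵒᵈ)
    ⟨fun i => OrderDual.toDual ((↑) ⁻¹' A i), fun _ _ hij _ h => hA hij h⟩
  refine ⟨i, N, (hA i.le_succ).antisymm fun j hj => ?_, fun j hj h =>
    mem_of_mem_zero i _ (by omega) ((hN j hj).mpr (hA (Nat.zero_le i) h))⟩
  obtain hjN | hjN := lt_or_ge j N
  · exact (Set.ext_iff.1 (hi (i + 1) i.le_succ) ⟨j, hjN⟩).1 hj
  · exact mem_of_mem_zero _ j hjN (hA (Nat.zero_le i) hj)

theorem exists_indep_image_indep_subset_closure {M : Type*} (m : Matroid M) [m.Finitary] {τ : M → M}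
    (hτ : ∀ X x, x ∈ m.closure X → τ x ∈ m.closure (τ '' X)) {z : ℕ → M} (hzE : ∀ j, z j ∈ m.E)
    {P : ℕ} (hP : 1 ≤ P) (hz : ∀ j, τ (z j) = z (j + P)) :
    ∃ B N, m.Indep B ∧ m.Indep (τ '' B) ∧ τ '' B ⊆ m.closure B ∧ (τ '' B \ B).Finite ∧
      ∀ j, N ≤ j → z j ∈ m.closure B := by
  let w (i l : ℕ) : M := z (i * P + l)
  have hw (i l : ℕ) : w (i + 1) l = w i (l + P) := congr_arg z (by ring)
  have τ_w (i l : ℕ) : τ (w i l) = w (i + 1) l := (hz _).trans (congr_arg z (by ring))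
  have image_w (i : ℕ) (I : Set ℕ) : τ '' (w i '' I) = w (i + 1) '' I := by
    simp_rw [image_image, τ_w]
  let A (i : ℕ) : Set ℕ := newIndices m (w i)
  have hA : Antitone A := antitone_nat_of_succ_le fun i l hl h =>
    hl (by rw [← image_w, ← τ_w]; exact hτ _ _ h)
  have hAP (i l : ℕ) (hl : l + P ∈ A i) : l ∈ A (i + 1) := fun h => hl <| by
    rw [← hw]
    refine m.closure_subset_closure ?_ h
    rintro _ ⟨j, hj, rfl⟩
    exact ⟨j + P, Nat.add_lt_add_right hj P, (hw i j).symm⟩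
  obtain ⟨i, N, hi, hN⟩ := exists_succ_eq_and_forall_add_mem hA hP hAP
  have mem_closure (l : ℕ) : w i l ∈ m.closure (w i '' A i) :=
    newIndices.mem_closure_image (fun _ => hzE _) l
  refine ⟨w i '' A i, i * P, newIndices.indep_image fun _ => hzE _, ?_, ?_, ?_, fun j hj => ?_⟩
  · rw [image_w, ← hi]
    exact newIndices.indep_image fun _ => hzE _
  · rw [image_w]
    rintro _ ⟨l, -, rfl⟩
    exact hw i l ▸ mem_closure (l + P)
  · refine ((finite_Iio N).image (w (i + 1))).subset ?_
    rw [image_w]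
    rintro _ ⟨⟨l, hl, rfl⟩, hlB⟩
    exact ⟨l, lt_of_not_ge fun hNl => hlB ⟨l + P, hN l hNl hl, (hw i l).symm⟩, rfl⟩
  · obtain ⟨l, rfl⟩ := Nat.exists_eq_add_of_le hj
    exact mem_closure l

theorem valuation_comap_isEquiv {K L : Type*} [Field K] [Field L] (V : ValuationSubring L)
    (f : K →+* L) : (V.comap f).valuation.IsEquiv (V.valuation.comap f) :=
  Valuation.isEquiv_of_val_le_one fun {x} => by
    rw [ValuationSubring.valuation_le_one_iff, ValuationSubring.mem_comap, Valuation.comap_apply,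
      ValuationSubring.valuation_le_one_iff]

theorem mem_of_mem_adjoin {B M : Type*} [CommRing B] [Field M] [Algebra B M]
    {V : ValuationSubring M} (hB : ∀ b, algebraMap B M b ∈ V) {T : Set M} (hT : T ⊆ V) {x : M}
    (hx : x ∈ Algebra.adjoin B T) : x ∈ V :=
  Algebra.adjoin_le (S := { V.toSubring with algebraMap_mem' := hB }) hT hx

/-- The set `T` lies in `V` and its residues are algebraically independent over the residues of
`B`.  This is expressed through the coefficients of polynomial relations, which avoids the residue
field. -/
structure IsResiduallyIndep (B : Type*) {M : Type*} [CommRing B] [Field M] [Algebra B M]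
    (V : ValuationSubring M) (T : Set M) : Prop where
  algebraMap_mem : ∀ b : B, algebraMap B M b ∈ V
  subset : T ⊆ V
  valuation_coeff_lt_one : ∀ P : MvPolynomial T B,
    V.valuation (MvPolynomial.aeval (fun x : T => (x : M)) P) < 1 →
      ∀ m, V.valuation (algebraMap B M (P.coeff m)) < 1

section Places

variable {B M : Type*} [CommRing B] [Field M] [Algebra B M]

namespace IsResiduallyIndep

variable {V : ValuationSubring M} {S T : Set M}

theorem mono (h : IsResiduallyIndep B V T) (hST : S ⊆ T) : IsResiduallyIndep B V S where
  algebraMap_mem := h.algebraMap_mem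
  subset := hST.trans h.subset
  valuation_coeff_lt_one P hP m := by
    rw [← MvPolynomial.coeff_rename_mapDomain _ (inclusion_injective hST) P m]
    refine h.valuation_coeff_lt_one _ ?_ _
    rwa [MvPolynomial.aeval_rename]

theorem comap {τ : M →+* M} {β : B →+* B}
    (hβ : ∀ b, algebraMap B M (β b) = τ (algebraMap B M b))
    (h : IsResiduallyIndep B V (τ '' T)) : IsResiduallyIndep B (V.comap τ) T where
  algebraMap_mem b := by
    rw [ValuationSubring.mem_comap, ← hβ]
    exact h.algebraMap_mem _
  subset x hx := h.subset (mem_image_of_mem τ hx)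
  valuation_coeff_lt_one P hP m := by
    let e : T → τ '' T := fun x => ⟨τ x, mem_image_of_mem τ x.2⟩
    have he : Function.Injective e := fun x y hxy =>
      Subtype.ext (τ.injective (congr_arg Subtype.val hxy))
    rw [(valuation_comap_isEquiv V τ).lt_one_iff_lt_one, Valuation.comap_apply] at hP ⊢
    rw [← hβ, ← MvPolynomial.coeff_map, ← MvPolynomial.coeff_rename_mapDomain e he]
    refine h.valuation_coeff_lt_one _ ?_ _
    have hcomp : (algebraMap B M).comp β = τ.comp (algebraMap B M) := RingHom.ext hβ
    convert hP using 2
    rw [MvPolynomial.aeval_rename, MvPolynomial.aeval_def, MvPolynomial.eval₂_map,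
      MvPolynomial.aeval_def, MvPolynomial.hom_eval₂, hcomp]
    rfl

end IsResiduallyIndep

variable (B M) in
/-- The filter on the valuation subrings of `M` containing `B` generated by the sets of those at
which a given nonzero element of `B` is a unit. -/
def genericPlaces : Filter (ValuationSubring M) :=
  ⨅ (f : B) (_ : f ≠ 0),
    Filter.principal {V | (∀ b, algebraMap B M b ∈ V) ∧ V.valuation (algebraMap B M f) = 1}

theorem eventually_genericPlaces [IsDomain B] {p : ValuationSubring M → Prop} :
    (∀ᶠ V in genericPlaces B M, p V) ↔ ∃ f : B, f ≠ 0 ∧ ∀ V : ValuationSubring M,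
      (∀ b, algebraMap B M b ∈ V) → V.valuation (algebraMap B M f) = 1 → p V := by
  have hdir : DirectedOn ((fun f : B => {V : ValuationSubring M |
      (∀ b, algebraMap B M b ∈ V) ∧ V.valuation (algebraMap B M f) = 1}) ⁻¹'o (· ≥ ·))
      {f | f ≠ 0} := by
    refine fun f hf g hg => ⟨f * g, mul_ne_zero hf hg, fun V ⟨hB, hV⟩ => ⟨hB, ?_⟩,
      fun V ⟨hB, hV⟩ => ⟨hB, ?_⟩⟩ <;> rw [map_mul, map_mul] at hV
    · exact eq_one_of_one_le_mul_left ((V.valuation_le_one_iff _).2 (hB f))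
        ((V.valuation_le_one_iff _).2 (hB g)) hV.ge
    · exact eq_one_of_one_le_mul_right ((V.valuation_le_one_iff _).2 (hB f))
        ((V.valuation_le_one_iff _).2 (hB g)) hV.ge
  refine ((Filter.hasBasis_biInf_principal hdir ⟨1, one_ne_zero⟩).eventually_iff).trans ?_
  simp only [mem_ofPred_eq, and_imp, ne_eq]

theorem eventually_valuation_algebraMap_eq_one {f : B} (hf : f ≠ 0) :
    ∀ᶠ V in genericPlaces B M, V.valuation (algebraMap B M f) = 1 :=
  Filter.mem_of_superset (Filter.mem_iInf_of_mem f <| Filter.mem_iInf_of_mem hf <|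
    Filter.mem_principal_self _) fun _ hV => hV.2

theorem eventually_valuation_eq_one_of_mem_adjoin {T : Set M} {l : M}
    (hl : l ∈ Algebra.adjoin B T) (hl0 : l ≠ 0) :
    ∀ᶠ V in genericPlaces B M, IsResiduallyIndep B V T → V.valuation l = 1 := by
  rw [Algebra.adjoin_eq_range] at hl
  obtain ⟨P, rfl⟩ := hl
  obtain ⟨m, hm⟩ := MvPolynomial.ne_zero_iff.1 (ne_zero_of_map hl0)
  filter_upwards [eventually_valuation_algebraMap_eq_one hm] with V hV hT
  refine le_antisymm
    ((V.valuation_le_one_iff _).2 (mem_of_mem_adjoin hT.algebraMap_mem hT.subset ?_))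
    (not_lt.1 fun h => (hT.valuation_coeff_lt_one P h m).ne hV)
  rw [Algebra.adjoin_eq_range]
  exact ⟨P, rfl⟩

theorem eventually_mem_of_isAlgebraic {T : Set M} {y : M}
    (hy : IsAlgebraic (Algebra.adjoin B T) y) :
    ∀ᶠ V in genericPlaces B M, IsResiduallyIndep B V T → y ∈ V := by
  obtain ⟨p, hp, hpy⟩ := hy
  filter_upwards [eventually_valuation_eq_one_of_mem_adjoin p.leadingCoeff.2
    (by simpa using hp)] with V hV hT
  have hint : IsIntegral V (p.leadingCoeff • y) :=
    (isIntegral_leadingCoeff_smul p y hpy).map_of_comp_eq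
      ((algebraMap (Algebra.adjoin B T) M).codRestrict V
          fun a => mem_of_mem_adjoin hT.algebraMap_mem hT.subset a.2)
      (RingHom.id M) rfl
  obtain ⟨a, ha⟩ := IsIntegrallyClosed.isIntegral_iff.1 hint
  have hle : V.valuation (p.leadingCoeff • y) ≤ 1 := by
    rw [← ha]
    exact V.valuation_le_one a
  rwa [Subalgebra.smul_def, smul_eq_mul, map_mul, hV hT, one_mul, V.valuation_le_one_iff] at hle

end Places

theorem exists_eval₂_aeval_eq_zero_of_isAlgebraic_insert {B M : Type*} [CommRing B] [Field M]
    [Algebra B M] {s : Set M} {x y : M} (hx : IsAlgebraic (Algebra.adjoin B (insert y s)) x) :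
    ∃ P : (Algebra.adjoin B s)[X][X], P ≠ 0 ∧
      P.eval₂ (aeval y : (Algebra.adjoin B s)[X] →ₐ[_] M).toRingHom x = 0 := by
  obtain ⟨p, hp, hpx⟩ := hx
  have hmem : ∀ z ∈ Algebra.adjoin B (insert y s), ∃ q : (Algebra.adjoin B s)[X],
      aeval y q = z := fun z hz => by
    rwa [insert_eq, union_comm, Algebra.adjoin_union_eq_adjoin_adjoin,
      Subalgebra.mem_restrictScalars, Algebra.adjoin_singleton_eq_range_aeval] at hz
  obtain ⟨P, hP⟩ : ∃ P : (Algebra.adjoin B s)[X][X],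
      P.map (aeval y : (Algebra.adjoin B s)[X] →ₐ[_] M).toRingHom = p.map (algebraMap _ M) := by
    rw [← mem_lifts, lifts_iff_coeff_lifts]
    intro i
    rw [coeff_map]
    exact hmem _ (p.coeff i).2
  refine ⟨P, ?_, by rw [← eval_map, hP, eval_map_algebraMap, hpx]⟩
  rintro rfl
  rw [Polynomial.map_zero, eq_comm, Polynomial.map_eq_zero_iff Subtype.val_injective] at hP
  exact hp hP

theorem map_contentIdeal_integerNormalization_eq_top {R S : Type*} [CommRing R] [CommRing S]
    [Algebra R S] (W : Submonoid R) [IsLocalization W S] {q : S[X]} (hq : q.contentIdeal = ⊤) :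
    (IsLocalization.integerNormalization W q).contentIdeal.map (algebraMap R S) = ⊤ := by
  obtain ⟨m, hm, hmq⟩ := IsLocalization.integerNormalization_spec W q
  have hunit : IsUnit (C (algebraMap R S m)) := (IsLocalization.map_units S (⟨m, hm⟩ : W)).map C
  have hsmul : m • q = C (algebraMap R S m) * q := by
    ext i
    rw [coeff_smul, coeff_C_mul, Algebra.smul_def]
  rw [← contentIdeal_map_eq_map_contentIdeal, hmq, hsmul, eq_top_iff, ← hq]
  exact contentIdeal_le_contentIdeal_of_dvd (hunit.mul_left_dvd.2 dvd_rfl)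

open Classical in
attribute [local instance] Polynomial.algebra Polynomial.isLocalization in
-- Over the fraction field of `D` the content of `P` is principal and can be divided out; what is
-- left has content ideal `⊤`, and clearing denominators only costs a nonzero constant.
theorem exists_eval₂_aeval_eq_zero_and_C_mem_contentIdeal {D M : Type*} [CommRing D] [IsDomain D]
    [Field M] [Algebra D M] [FaithfulSMul D M] {x y : M} (hy : Transcendental D y) {P : D[X][X]}
    (hP : P ≠ 0) (hx : P.eval₂ (aeval y : D[X] →ₐ[D] M).toRingHom x = 0) :
    ∃ (Q : D[X][X]) (r : D), Q.eval₂ (aeval y : D[X] →ₐ[D] M).toRingHom x = 0 ∧ r ≠ 0 ∧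
      C r ∈ Q.contentIdeal := by
  let E := FractionRing D
  let W := (nonZeroDivisors D).map (C : D →+* D[X])
  let := FractionRing.liftAlgebra D M
  have := FractionRing.isScalarTower_liftAlgebra D M
  let g : E[X] →+* M := (aeval y : E[X] →ₐ[E] M).toRingHom
  have hg : Function.Injective g :=
    transcendental_iff_injective.1 fun h => hy ((IsFractionRing.isAlgebraic_iff D E M).2 h)
  have hgD : g.comp (algebraMap D[X] E[X]) = (aeval y : D[X] →ₐ[D] M).toRingHom :=
    ringHom_ext (fun a => by simp [g, algebraMap_def, ← IsScalarTower.algebraMap_apply])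
      (by simp [g, algebraMap_def])
  have hinj : Function.Injective (algebraMap D[X] E[X]) :=
    map_injective _ (IsFractionRing.injective D E)
  let q : E[X][X] := (P.map (algebraMap D[X] E[X])).primPart
  have hq : q.eval₂ g x = 0 :=
    eval₂_primPart_eq_zero hg ((Polynomial.map_ne_zero_iff hinj).2 hP) (by rwa [eval₂_map, hgD])
  have hdisj := (IsLocalization.map_algebraMap_ne_top_iff_disjoint W E[X] _).not.1 <| not_not.2 <|
    map_contentIdeal_integerNormalization_eq_top W <|
      (isPrimitive_iff_contentIdeal_eq_top q).1 (isPrimitive_primPart _)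
  obtain ⟨_, ⟨r, hr, rfl⟩, hrQ⟩ := not_disjoint_iff.1 hdisj
  exact ⟨_, r, hgD ▸ IsLocalization.integerNormalization_eval₂_eq_zero W g q hq,
    nonZeroDivisors.ne_zero hr, hrQ⟩

section Residues

variable {M : Type*} [Field M] (V : ValuationSubring M)

/-- The residue in the residue field of `V` of an element of `V`, and zero outside `V`.  Being
total, it can be used to index an algebraically independent family by a subset of `M`. -/
noncomputable def residueOrZero : M → IsLocalRing.ResidueField V :=
  Function.extend Subtype.val (IsLocalRing.residue V) 0

variable {V}

theorem residueOrZero_coe (a : V) : residueOrZero V a = IsLocalRing.residue V a :=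
  Subtype.val_injective.extend_apply _ _ a

theorem residueOrZero_eq_zero_iff {x : M} (hx : x ∈ V) :
    residueOrZero V x = 0 ↔ V.valuation x < 1 := by
  rw [show residueOrZero V x = _ from residueOrZero_coe ⟨x, hx⟩, IsLocalRing.residue_eq_zero_iff,
    ValuationSubring.valuation_lt_one_iff]

variable {B : Type*} [CommRing B] [Algebra B M]

/-- The composition of the structure map `B → V` with the residue map of `V`. -/
noncomputable def baseResidue (hB : ∀ b, algebraMap B M b ∈ V) : B →+* IsLocalRing.ResidueField V :=
  (IsLocalRing.residue V).comp ((algebraMap B M).codRestrict V hB)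

variable (hB : ∀ b, algebraMap B M b ∈ V)

theorem baseResidue_eq_zero_iff {b : B} :
    baseResidue hB b = 0 ↔ V.valuation (algebraMap B M b) < 1 := by
  rw [← residueOrZero_eq_zero_iff (hB b)]
  exact (congr_arg (· = 0) (residueOrZero_coe ⟨_, hB b⟩).symm).to_iff

theorem residueOrZero_aeval {T : Set M} (hT : T ⊆ V) (P : MvPolynomial T B) :
    residueOrZero V (MvPolynomial.aeval (fun x : T => (x : M)) P) =
      MvPolynomial.aeval (fun x : T => residueOrZero V x)
        (P.map (baseResidue hB).rangeRestrict) := by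
  let v : V := P.eval₂ ((algebraMap B M).codRestrict V hB) (inclusion hT)
  have hv : MvPolynomial.aeval (fun x : T => (x : M)) P = v :=
    (MvPolynomial.hom_eval₂ P ((algebraMap B M).codRestrict V hB) V.subtype (inclusion hT)).symm
  rw [hv, residueOrZero_coe, MvPolynomial.hom_eval₂, MvPolynomial.aeval_def,
    MvPolynomial.eval₂_map]
  congr 1
  exact funext fun x => (residueOrZero_coe (inclusion hT x)).symm

theorem isResiduallyIndep_iff {T : Set M} (hT : T ⊆ V) :
    IsResiduallyIndep B V T ↔ AlgebraicIndepOn (baseResidue hB).range (residueOrZero V) T := by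
  have hcoeff (P : MvPolynomial T B) : P.map (baseResidue hB).rangeRestrict = 0 ↔
      ∀ m, V.valuation (algebraMap B M (P.coeff m)) < 1 := by
    simp only [MvPolynomial.ext_iff, MvPolynomial.coeff_map, MvPolynomial.coeff_zero,
      ← baseResidue_eq_zero_iff hB, Subtype.ext_iff, RingHom.coe_rangeRestrict,
      ZeroMemClass.coe_zero]
  have hval (P : MvPolynomial T B) :
      V.valuation (MvPolynomial.aeval (fun x : T => (x : M)) P) < 1 ↔
      MvPolynomial.aeval (fun x : T => residueOrZero V x)
        (P.map (baseResidue hB).rangeRestrict) = 0 := by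
    have hmem : MvPolynomial.aeval (fun x : T => (x : M)) P ∈ Algebra.adjoin B T := by
      rw [Algebra.adjoin_eq_range]
      exact ⟨P, rfl⟩
    rw [← residueOrZero_aeval hB hT, residueOrZero_eq_zero_iff (mem_of_mem_adjoin hB hT hmem)]
  rw [AlgebraicIndepOn, algebraicIndependent_iff,
    (MvPolynomial.map_surjective _ (baseResidue hB).rangeRestrict_surjective).forall]
  simp only [hcoeff, ← hval]
  exact ⟨fun h => h.valuation_coeff_lt_one, fun h => ⟨hB, hT, h⟩⟩

theorem residueOrZero_mem_adjoin {T : Set M} (hT : T ⊆ V) {x : M} (hx : x ∈ Algebra.adjoin B T) :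
    residueOrZero V x ∈ Algebra.adjoin (baseResidue hB).range (residueOrZero V '' T) := by
  rw [Algebra.adjoin_eq_range] at hx
  obtain ⟨P, rfl⟩ := hx
  refine (residueOrZero_aeval hB hT P).symm ▸ ?_
  rw [image_eq_range, Algebra.adjoin_range_eq_range_aeval]
  exact ⟨_, rfl⟩

end Residues

section Exchange

variable {B M : Type*} [CommRing B] [Field M] [Algebra B M]

theorem mem_matroid_closure_iff [FaithfulSMul B M] {s : Set M} {y : M} :
    y ∈ (AlgebraicIndependent.matroid B M).closure s ↔ IsAlgebraic (Algebra.adjoin B s) y := by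
  rw [AlgebraicIndependent.matroid_closure_eq, SetLike.mem_coe, Subalgebra.mem_algebraicClosure]

theorem map_mem_matroid_closure [FaithfulSMul B M] {τ : M →+* M} {β : B →+* B}
    (hβ : ∀ b, algebraMap B M (β b) = τ (algebraMap B M b)) {s : Set M} {x : M}
    (hx : x ∈ (AlgebraicIndependent.matroid B M).closure s) :
    τ x ∈ (AlgebraicIndependent.matroid B M).closure (τ '' s) := by
  rw [mem_matroid_closure_iff] at hx ⊢
  let preimage : Subalgebra B M :=
    { (Algebra.adjoin B (τ '' s)).toSubring.comap τ with
      algebraMap_mem' := fun b => by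
        change τ (algebraMap B M b) ∈ Algebra.adjoin B (τ '' s)
        rw [← hβ]
        exact Subalgebra.algebraMap_mem _ _ }
  have hadj : Algebra.adjoin B s ≤ preimage :=
    Algebra.adjoin_le fun y hy => Algebra.subset_adjoin (mem_image_of_mem τ hy)
  let τs : Algebra.adjoin B s →+* Algebra.adjoin B (τ '' s) :=
    (τ.comp (Algebra.adjoin B s).val.toRingHom).codRestrict _ fun a => hadj a.2
  exact hx.ringHom_of_comp_eq τs τ (fun a b hab => Subtype.ext (τ.injective
    (congr_arg Subtype.val hab))) rfl

theorem eventually_isAlgebraic_residueOrZero {s : Set M} {x y : M}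
    (hy : Transcendental (Algebra.adjoin B s) y)
    (hx : IsAlgebraic (Algebra.adjoin B (insert y s)) x) :
    ∀ᶠ V in genericPlaces B M, ∀ h : IsResiduallyIndep B V s, y ∈ V → x ∈ V →
      IsAlgebraic (Algebra.adjoin (baseResidue h.algebraMap_mem).range
        (residueOrZero V '' insert y s)) (residueOrZero V x) := by
  obtain ⟨P, hP, hPx⟩ := exists_eval₂_aeval_eq_zero_of_isAlgebraic_insert hx
  obtain ⟨Q, r, hQ, hr, hrQ⟩ := exists_eval₂_aeval_eq_zero_and_C_mem_contentIdeal hy hP hPx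
  filter_upwards [eventually_valuation_eq_one_of_mem_adjoin r.2 (by simpa using hr)]
    with V hV h hyV hxV
  have hsV : insert y s ⊆ (V : Set M) := insert_subset hyV h.subset
  let evalY : (Algebra.adjoin B s)[X] →+* M :=
    (aeval y : (Algebra.adjoin B s)[X] →ₐ[Algebra.adjoin B s] M).toRingHom
  have hadj (q) : evalY q ∈ Algebra.adjoin B (insert y s) := by
    rw [insert_eq, union_comm, Algebra.adjoin_union_eq_adjoin_adjoin,
      Subalgebra.mem_restrictScalars]
    exact aeval_mem_adjoin_singleton _ _
  let evalV : (Algebra.adjoin B s)[X] →+* V :=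
    evalY.codRestrict V fun q => mem_of_mem_adjoin h.algebraMap_mem hsV (hadj q)
  let ε := ((IsLocalRing.residue V).comp evalV).codRestrict
    (Algebra.adjoin (baseResidue h.algebraMap_mem).range (residueOrZero V '' insert y s))
    fun q => by
      rw [RingHom.comp_apply, ← residueOrZero_coe]
      exact residueOrZero_mem_adjoin h.algebraMap_mem hsV (hadj q)
  refine ⟨Q.map ε, fun h0 => ?_, ?_⟩
  · have hεr : ε (C r) ∈ (Q.map ε).contentIdeal := by
      rw [contentIdeal_map_eq_map_contentIdeal]
      exact Ideal.mem_map_of_mem _ hrQ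
    rw [h0, contentIdeal_zero, Ideal.mem_bot, Subtype.ext_iff] at hεr
    have hr0 : residueOrZero V (evalV (C r) : M) = 0 := (residueOrZero_coe _).trans hεr
    rw [residueOrZero_eq_zero_iff (evalV (C r)).2,
      show (evalV (C r) : M) = r from aeval_C y r, hV h] at hr0
    exact hr0.false
  · have hQV : Q.eval₂ evalV ⟨x, hxV⟩ = 0 := by
      apply V.subtype_injective
      rw [hom_eval₂, map_zero]
      exact hQ
    rw [aeval_def, eval₂_map, show residueOrZero V x = _ from residueOrZero_coe ⟨x, hxV⟩]
    exact (hom_eval₂ Q evalV (IsLocalRing.residue V) ⟨x, hxV⟩).symm.trans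
      (by rw [hQV, map_zero])

theorem eventually_isResiduallyIndep_insert [FaithfulSMul B M] {s : Set M} {x y : M}
    (hy : y ∈ (AlgebraicIndependent.matroid B M).closure (insert x s))
    (hys : y ∉ (AlgebraicIndependent.matroid B M).closure s) :
    ∀ᶠ V in genericPlaces B M,
      IsResiduallyIndep B V (insert x s) → IsResiduallyIndep B V (insert y s) := by
  have : IsDomain B := (FaithfulSMul.algebraMap_injective B M).isDomain
  have hxs : x ∉ s := fun h => hys (by rwa [insert_eq_of_mem h] at hy)
  have hyM : y ∉ s := fun h => hys (Matroid.mem_closure_of_mem _ h (subset_univ _))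
  have hx := Matroid.mem_closure_insert hys hy
  rw [mem_matroid_closure_iff] at hx hy hys
  filter_upwards [eventually_mem_of_isAlgebraic hy, eventually_isAlgebraic_residueOrZero hys hx]
    with V hyV hxalg hT
  have hS := hT.mono (subset_insert x s)
  have hyT := hyV hT
  have hxy := hxalg hS hyT (hT.subset (mem_insert x s))
  rw [isResiduallyIndep_iff hT.algebraMap_mem hT.subset, AlgebraicIndepOn.insert_iff hxs] at hT
  rw [isResiduallyIndep_iff hS.algebraMap_mem (insert_subset hyT hS.subset),
    AlgebraicIndepOn.insert_iff hyM]
  refine ⟨hT.1, fun hyalg => hT.2 ?_⟩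
  refine hxy.adjoin_of_forall_isAlgebraic fun z hz => ?_
  rw [image_insert_eq] at hz
  rwa [hz.1.resolve_right hz.2]

theorem exists_mem_sdiff_notMem_closure_sdiff {α : Type*} {m : Matroid α} {S T : Set α}
    (hS : m.Indep S) (hT : m.Indep T) {y : α} (hy : y ∈ T \ S) (hyS : y ∈ m.closure S) :
    ∃ x ∈ S \ T, y ∉ m.closure (S \ {x}) := by
  by_contra! h
  let sets : Set (Set α) := insert S ((fun x => S \ {x}) '' (S \ T))
  have hsets : ∀ X ∈ sets, X ⊆ S ∧ y ∈ m.closure X := by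
    rintro _ (rfl | ⟨x, hx, rfl⟩)
    · exact ⟨subset_rfl, hyS⟩
    · exact ⟨sdiff_subset, h x hx⟩
  have hyI : y ∈ m.closure (⋂₀ sets) := by
    rw [hS.closure_sInter_eq_biInter_closure_of_forall_subset (insert_nonempty _ _)
      fun X hX => (hsets X hX).1]
    exact mem_iInter₂.2 fun X hX => (hsets X hX).2
  refine hT.notMem_closure_sdiff_of_mem hy.1 (m.closure_subset_closure (fun x hx => ?_) hyI)
  have hxS : x ∈ S := hx S (mem_insert _ _)
  refine ⟨by_contra fun hxT => ?_, fun hxy => hy.2 (hxy ▸ hxS)⟩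
  exact (hx _ (mem_insert_of_mem _ ⟨x, ⟨hxS, hxT⟩, rfl⟩)).2 rfl

theorem eventually_isResiduallyIndep_of_subset_closure [FaithfulSMul B M] {S T : Set M}
    (hS : (AlgebraicIndependent.matroid B M).Indep S)
    (hT : (AlgebraicIndependent.matroid B M).Indep T)
    (hTS : T ⊆ (AlgebraicIndependent.matroid B M).closure S) (hfin : (T \ S).Finite) :
    ∀ᶠ V in genericPlaces B M, IsResiduallyIndep B V S → IsResiduallyIndep B V T := by
  have : IsDomain B := (FaithfulSMul.algebraMap_injective B M).isDomain
  induction hn : (T \ S).ncard generalizing S with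
  | zero =>
    rw [ncard_eq_zero hfin, sdiff_eq_empty] at hn
    exact Filter.Eventually.of_forall fun _ h => h.mono hn
  | succ n ih =>
    obtain ⟨y, hy⟩ : (T \ S).Nonempty := nonempty_of_ncard_ne_zero (by omega)
    obtain ⟨x, hx, hyx⟩ := exists_mem_sdiff_notMem_closure_sdiff hS hT hy (hTS hy.1)
    have hins : insert x (S \ {x}) = S := insert_sdiff_self_of_mem hx.1
    have hyS : y ∈ (AlgebraicIndependent.matroid B M).closure (insert x (S \ {x})) := by
      rw [hins]
      exact hTS hy.1
    have hcl := Matroid.closure_insert_congr ⟨hyS, hyx⟩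
    have hind := ((hS.subset sdiff_subset).notMem_closure_iff.1 hyx).1
    have hdiff : T \ insert y (S \ {x}) = (T \ S) \ {y} := by
      ext t
      have : t = x → t ∉ T := fun h => h ▸ hx.2
      simp only [mem_sdiff, mem_insert_iff, mem_singleton_iff]
      tauto
    have hexch := eventually_isResiduallyIndep_insert hyS hyx
    rw [hins] at hcl hexch
    filter_upwards [hexch, ih hind (hcl ▸ hTS) (hdiff ▸ hfin.subset sdiff_subset)
      (by rw [hdiff, ncard_sdiff_singleton_of_mem hy, hn, Nat.add_sub_cancel])] with V h₁ h₂
    exact h₂ ∘ h₁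

end Exchange

section Existence

variable {B M : Type*} [CommRing B] [Field M]

theorem exists_valuationSubring_valuation_lt_one_iff {f : B →+* M} (hf : Function.Injective f)
    (Q : Ideal B) [hQ : Q.IsPrime] :
    ∃ V : ValuationSubring M, ∀ b, f b ∈ V ∧ (V.valuation (f b) < 1 ↔ b ∈ Q) := by
  have hunit (s : Q.primeCompl) : IsUnit (f s) := by
    rw [isUnit_iff_ne_zero, ne_eq, map_eq_zero_iff f hf]
    exact fun h => s.2 (h ▸ Q.zero_mem)
  let ι : Localization.AtPrime Q →+* M := IsLocalization.lift hunit
  obtain ⟨V, hV, hlocal⟩ := IsLocalRing.exists_factor_valuationRing ι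
  have hι (b : B) : ι (algebraMap B _ b) = f b := IsLocalization.lift_eq hunit b
  refine ⟨V, fun b => ⟨hι b ▸ hV (algebraMap B _ b), ?_⟩⟩
  rw [← hι, ← IsLocalization.AtPrime.to_map_mem_maximal_iff (Localization.AtPrime Q) Q b]
  rw [IsLocalRing.mem_maximalIdeal, mem_nonunits_iff, ← isUnit_map_iff (ι.codRestrict _ hV)]
  exact (V.valuation_lt_one_iff ⟨_, hV _⟩).symm.trans (IsLocalRing.mem_maximalIdeal _)

variable [Algebra B M]

theorem exists_isResiduallyIndep {T : Set M} (hT : AlgebraicIndepOn B id T) (Q : Ideal B)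
    [Q.IsPrime] : ∃ V : ValuationSubring M, IsResiduallyIndep B V T ∧
      ∀ b : B, V.valuation (algebraMap B M b) < 1 ↔ b ∈ Q := by
  let reduction : MvPolynomial T B →+* MvPolynomial T (B ⧸ Q) :=
    MvPolynomial.map (Ideal.Quotient.mk Q)
  have hmem (P : MvPolynomial T B) : P ∈ RingHom.ker reduction ↔ ∀ m, P.coeff m ∈ Q := by
    simp only [RingHom.mem_ker, reduction, MvPolynomial.ext_iff, MvPolynomial.coeff_map,
      MvPolynomial.coeff_zero, Ideal.Quotient.eq_zero_iff_mem]
  have hC (b : B) : MvPolynomial.C b ∈ RingHom.ker reduction ↔ b ∈ Q := by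
    rw [RingHom.mem_ker, MvPolynomial.map_C, MvPolynomial.C_eq_zero,
      Ideal.Quotient.eq_zero_iff_mem]
  let ev := MvPolynomial.aeval (R := B) fun x : T => (x : M)
  have ev_C (b : B) : ev (MvPolynomial.C b) = algebraMap B M b := MvPolynomial.aeval_C _ b
  have ev_X (x : T) : ev (MvPolynomial.X x) = x := MvPolynomial.aeval_X _ x
  have := RingHom.ker_isPrime reduction
  obtain ⟨V, hV⟩ := exists_valuationSubring_valuation_lt_one_iff (f := ev.toRingHom) hT
    (RingHom.ker reduction)
  have hVQ (b : B) : V.valuation (algebraMap B M b) < 1 ↔ b ∈ Q := by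
    rw [← ev_C, ← hC]
    exact (hV _).2
  refine ⟨V, ⟨fun b => ev_C b ▸ (hV _).1, fun x hx => ?_,
    fun P hP m => (hVQ _).2 ((hmem P).1 ((hV P).2.1 hP) m)⟩, hVQ⟩
  rw [← Subtype.coe_mk x hx, ← ev_X]
  exact (hV _).1

end Existence

section Orbits

theorem iterate_apply_of_apply_eq_add {α : Type*} {τ : α → α} {z : ℕ → α} {P : ℕ}
    (hz : ∀ j, τ (z j) = z (j + P)) (n i : ℕ) : τ^[n] (z i) = z (i + n * P) := by
  induction n generalizing i with
  | zero => rw [Function.iterate_zero_apply, Nat.zero_mul, Nat.add_zero]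
  | succ n ih =>
    rw [Function.iterate_succ_apply, hz, ih]
    congr 1
    ring

variable {B M : Type*} [CommRing B] [Field M] [Algebra B M] [FaithfulSMul B M] {τ : M →+* M}
  {β : B →+* B} (hβ : ∀ b, algebraMap B M (β b) = τ (algebraMap B M b)) {z : ℕ → M} {P : ℕ}
  (hP : 1 ≤ P) (hz : ∀ j, τ (z j) = z (j + P))

include hβ hP hz

theorem exists_algebraicIndepOn_forall_mem :
    ∃ f : B, f ≠ 0 ∧ ∃ T : Set M, AlgebraicIndepOn B id T ∧ ∀ V : ValuationSubring M,
      IsResiduallyIndep B V T → (∀ j, V.valuation (algebraMap B M (β^[j] f)) = 1) →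
        ∀ j, z j ∈ V := by
  have : IsDomain B := (FaithfulSMul.algebraMap_injective B M).isDomain
  obtain ⟨S, N, hS, hτS, hcl, hfin, hzS⟩ := exists_indep_image_indep_subset_closure
    (AlgebraicIndependent.matroid B M) (fun _ _ => map_mem_matroid_closure hβ)
    (fun _ => mem_univ _) hP hz
  obtain ⟨T, hT, hST⟩ := hS.exists_isBase_superset
  have hzT (j) : IsAlgebraic (Algebra.adjoin B T) (z j) :=
    mem_matroid_closure_iff.1 (by rw [hT.closure_eq]; trivial)
  have htail (i) : IsAlgebraic (Algebra.adjoin B S) (z (N + i)) :=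
    mem_matroid_closure_iff.1 (hzS _ (Nat.le_add_right N i))
  obtain ⟨f, hf, hgen⟩ := eventually_genericPlaces.1
    ((eventually_isResiduallyIndep_of_subset_closure hS hτS hcl hfin).and
      (((Finset.range N).eventually_all.2 fun j _ => eventually_mem_of_isAlgebraic (hzT j)).and
        ((Finset.range P).eventually_all.2 fun i _ => eventually_mem_of_isAlgebraic (htail i))))
  refine ⟨f, hf, T, AlgebraicIndependent.matroid_indep_iff.1 hT.indep, fun V hV hVf j => ?_⟩
  have hβj (j b) : algebraMap B M (β^[j] b) = (τ ^ j) (algebraMap B M b) :=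
    (Function.Semiconj.iterate_right hβ j b).trans (by rw [RingHom.coe_pow])
  have hcomap (j) := hgen (V.comap (τ ^ j))
    (fun b => by rw [ValuationSubring.mem_comap, ← hβj]; exact hV.algebraMap_mem _)
    (by rw [(valuation_comap_isEquiv V _).eq_one_iff_eq_one, Valuation.comap_apply, ← hβj, hVf])
  have hVS (j) : IsResiduallyIndep B (V.comap (τ ^ j)) S := by
    induction j with
    | zero => exact hV.mono hST
    | succ j ih =>
      rw [pow_succ, RingHom.mul_def, ← ValuationSubring.comap_comap]
      exact ((hcomap j).1 ih).comap hβ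
  obtain hj | hj := lt_or_ge j N
  · exact (hcomap 0).2.1 j (Finset.mem_range.2 hj) hV
  · obtain ⟨i, rfl⟩ := Nat.exists_eq_add_of_le hj
    have h := (hcomap (i / P)).2.2 (i % P) (Finset.mem_range.2 (Nat.mod_lt _ hP)) (hVS _)
    rwa [ValuationSubring.mem_comap, RingHom.coe_pow, iterate_apply_of_apply_eq_add hz,
      Nat.add_assoc, Nat.mod_add_div'] at h

theorem exists_forall_prime_exists_valuationSubring :
    ∃ f : B, f ≠ 0 ∧ ∀ (Q : Ideal B) [Q.IsPrime], (∀ j, β^[j] f ∉ Q) →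
      ∃ V : ValuationSubring M, (∀ b, algebraMap B M b ∈ V) ∧ (∀ j, z j ∈ V) ∧
        ∀ q ∈ Q, V.valuation (algebraMap B M q) < 1 := by
  obtain ⟨f, hf, T, hT, hmem⟩ := exists_algebraicIndepOn_forall_mem hβ hP hz
  refine ⟨f, hf, fun Q _ hQ => ?_⟩
  obtain ⟨V, hV, hVQ⟩ := exists_isResiduallyIndep hT Q
  refine ⟨V, hV.algebraMap_mem, hmem V hV fun j => ?_, fun q => (hVQ q).2⟩
  exact ((V.valuation_le_one_iff _).2 (hV.algebraMap_mem _)).eq_of_not_lt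
    fun h => hQ j ((hVQ _).1 h)

end Orbits

section Specialization

theorem eq_zero_of_sum_tmul_eq_zero {k V N ι : Type*} [Field k] [AddCommGroup V] [Module k V]
    [AddCommGroup N] [Module k N] {v : ι → V} (hv : LinearIndependent k v) {s : Finset ι}
    {c : ι → N} (h : ∑ i ∈ s, v i ⊗ₜ[k] c i = 0) {i : ι} (hi : i ∈ s) : c i = 0 := by
  classical
  obtain ⟨g, hg⟩ := LinearMap.exists_leftInverse_of_injective _ (LinearMap.ker_eq_bot.2 hv)
  have hgv (j) : g (v j) = Finsupp.single j 1 := by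
    simpa using LinearMap.congr_fun hg (Finsupp.single j 1)
  simpa [hgv, Finsupp.single_apply, ite_smul, hi] using
    congrArg (fun x => TensorProduct.lid k N ((Finsupp.lapply i ∘ₗ g).rTensor N x)) h

variable {k K A : Type*} [Field k] [Field K] [Algebra k K] [CommRing A] [Algebra k A]
  {ς : k →+* k} {σ : K →+* K} {α : A →+* A}
  (hσ : σ.comp (algebraMap k K) = (algebraMap k K).comp ς)
  (hα : α.comp (algebraMap k A) = (algebraMap k A).comp ς)

include hσ in
theorem linearIndependent_iterate (hς : Function.Surjective ς) {ι : Type*} {v : ι → K}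
    (hv : LinearIndependent k v) (n : ℕ) : LinearIndependent k fun i => σ^[n] (v i) := by
  induction n with
  | zero => exact hv
  | succ n ih =>
    simp only [Function.iterate_succ_apply']
    exact ih.map_of_surjective_injective ς σ.toAddMonoidHom hς (fun m => (map_eq_zero σ).1)
      fun r m => by
        simpa [Algebra.smul_def] using Or.inl (RingHom.congr_fun hσ r)

theorem iterate_mapRingHom_sum_tmul {ι : Type*} (s : Finset ι) (v : ι → K) (c : ι → A) (n : ℕ) :
    (Algebra.TensorProduct.mapRingHom ς σ α hσ hα)^[n] (∑ i ∈ s, v i ⊗ₜ c i) =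
      ∑ i ∈ s, σ^[n] (v i) ⊗ₜ α^[n] (c i) := by
  induction n with
  | zero => rfl
  | succ n ih => simp [Function.iterate_succ_apply', ih]

/-- Expand `f` in a basis of `K` over `k`.  The coordinates of its images along a basis that moves
with `σ` are the images of the coordinates of `f`, any one of which can serve as `b`. -/
theorem exists_ne_zero_forall_map_iterate_ne_zero (hς : Function.Surjective ς) {f : K ⊗[k] A}
    (hf : f ≠ 0) :
    ∃ b : A, b ≠ 0 ∧ ∀ (q : Ideal A) (n : ℕ), α^[n] b ∉ q →
      Algebra.TensorProduct.map (AlgHom.id k K) (Ideal.Quotient.mkₐ k q)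
        ((Algebra.TensorProduct.mapRingHom ς σ α hσ hα)^[n] f) ≠ 0 := by
  let ℬ := Module.Basis.ofVectorSpace k K
  obtain ⟨c, rfl⟩ := TensorProduct.eq_repr_basis_left ℬ f
  obtain ⟨i, hi⟩ := Finsupp.support_nonempty_iff.2 fun h : c = 0 => hf (by simp [h])
  refine ⟨c i, Finsupp.mem_support_iff.1 hi, fun q n hn h => hn ?_⟩
  rw [Finsupp.sum, iterate_mapRingHom_sum_tmul, map_sum] at h
  exact Ideal.Quotient.eq_zero_iff_mem.1
    (eq_zero_of_sum_tmul_eq_zero (linearIndependent_iterate hσ hς ℬ.linearIndependent n) h hi)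

include hσ hα in
theorem exists_forall_prime_exists_valuationSubring_of_fixed {M : Type*} [Field M] [Algebra K M]
    [Algebra k M] [IsScalarTower k K M] (hς : Function.Surjective ς) (φ : K →ₐ[k] K)
    (hfix : ∀ (m : ℕ) a, 1 ≤ m → (φ ^ m) a = a → a ∈ range (algebraMap k K)) (ψ : M →+* M)
    (hψ : ∀ a, ψ (algebraMap K M a) = algebraMap K M (φ a)) {j : A →ₐ[k] M}
    (hj : ∀ a, ψ (j a) = j a) (hinj : Function.Injective j) (τ : M →+* M)
    (hτ : ∀ a, τ (algebraMap K M a) = algebraMap K M (σ a))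
    (hτj : ∀ a, τ (j a) = j (α a))
    {z : ℕ → M} {P : ℕ} (hP : 1 ≤ P) (hz : ∀ n, τ (z n) = z (n + P)) :
    ∃ b : A, b ≠ 0 ∧ ∀ (q : Ideal A) [q.IsPrime], (∀ n, α^[n] b ∉ q) →
      ∃ V : ValuationSubring M, (∀ a, algebraMap K M a ∈ V) ∧ (∀ n, z n ∈ V) ∧
        ∀ a ∈ q, V.valuation (j a) < 1 := by
  let ι := Algebra.TensorProduct.productMap (IsScalarTower.toAlgHom k K M) j
  let : Algebra (K ⊗[k] A) M := ι.toRingHom.toAlgebra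
  have halg (x : K ⊗[k] A) : algebraMap (K ⊗[k] A) M x = ι x := rfl
  have : FaithfulSMul (K ⊗[k] A) M := (faithfulSMul_iff_algebraMap_injective _ _).2
    (productMap_injective_of_fixed φ (fun a ha => hfix 1 a le_rfl (by rwa [pow_one])) ψ hψ j hj
      hinj)
  let β := Algebra.TensorProduct.mapRingHom ς σ α hσ hα
  have hβ (x : K ⊗[k] A) : algebraMap _ M (β x) = τ (algebraMap _ M x) := by
    induction x with
    | zero => simp
    | tmul x a => simp [halg, ι, β, hτ, hτj]
    | add x y hx hy => simp only [map_add, hx, hy]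
  obtain ⟨f, hf, h⟩ := exists_forall_prime_exists_valuationSubring hβ hP hz
  obtain ⟨b, hb, hbq⟩ := exists_ne_zero_forall_map_iterate_ne_zero hσ hα hς hf
  refine ⟨b, hb, fun q _ hq => ?_⟩
  let θ := Algebra.TensorProduct.map (AlgHom.id k K) (Ideal.Quotient.mkₐ k q)
  have : IsDomain (K ⊗[k] (A ⧸ q)) := isDomain_tensorProduct_of_fixed φ hfix
  have : (RingHom.ker θ).IsPrime := RingHom.ker_isPrime θ
  obtain ⟨V, hV, hzV, hqV⟩ := h (RingHom.ker θ) fun n => hbq q n (hq n)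
  refine ⟨V, fun a => by simpa [halg, ι] using hV (a ⊗ₜ 1), hzV, fun a ha => ?_⟩
  simpa [halg, ι] using hqV (1 ⊗ₜ a)
    (by simp [θ, RingHom.mem_ker, Ideal.Quotient.eq_zero_iff_mem.2 ha])

end Specialization

/-- The fixed elements are linearly disjoint from `K`, so a description of `L` over `K` by finitely
many orbits descends to `k`. -/
theorem exists_finset_le_adjoin_forwardOrbit {k K M : Type*} [Field k] [Field K] [Field M]
    [Algebra k K] [Algebra K M] [Algebra k M] [IsScalarTower k K M] (φ : K →ₐ[k] K)
    (hfix : ∀ a, φ a = a → a ∈ range (algebraMap k K)) (ψ : M →+* M)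
    (hψ : ∀ a, ψ (algebraMap K M a) = algebraMap K M (φ a)) {σ : K →+* K} (τ : M →+* M)
    (hτ : ∀ a, τ (algebraMap K M a) = algebraMap K M (σ a)) {L : IntermediateField k M}
    (hψL : ∀ x ∈ L, ψ x = x) (hτL : MapsTo τ L L) {z : ℕ → M} {P : ℕ} (hP : 1 ≤ P)
    (hz : ∀ n, τ (z n) = z (n + P)) (hLz : ∀ x ∈ L, x ∈ IntermediateField.adjoin K (range z)) :
    ∃ T : Finset M, (T : Set M) ⊆ L ∧ L ≤ IntermediateField.adjoin k (forwardOrbit τ T) := by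
  have hK : (algebraMap K M).fieldRange ≤ (algebraMap K M).fieldRange.comap τ := by
    rintro _ ⟨a, rfl⟩
    exact ⟨σ a, (hτ a).symm⟩
  obtain ⟨T, hTL, hT⟩ := exists_finset_le_closure_forwardOrbit_sup τ hK (L := L.toSubfield) hτL hP
    hz fun x hx => by
      have := hLz x hx
      rwa [← IntermediateField.mem_toSubfield, IntermediateField.adjoin_toSubfield,
        Subfield.closure_union, ← RingHom.coe_fieldRange, Subfield.closure_eq] at this
  have hE : IntermediateField.adjoin k (forwardOrbit τ T) ≤ L :=
    IntermediateField.adjoin_le_iff.2 (forwardOrbit.subset_of_mapsTo hτL hTL)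
  refine ⟨T, hTL, fun x hx => mem_of_mem_closure_union_of_fixed φ hfix ψ hψ
    (fun a ha => hψL a (hE ha)) (hψL x hx) ?_⟩
  rw [Subfield.closure_union, ← RingHom.coe_fieldRange, Subfield.closure_eq]
  exact sup_le_sup_right
    (Subfield.closure_mono (IntermediateField.subset_adjoin k (forwardOrbit τ T))) _ (hT hx)

section DiffSimple

variable {R : Type*} [CommRing R] {φ χ : R →+* R}

theorem DiffSimple.nontrivial (h : DiffSimple φ) : Nontrivial R :=
  not_subsingleton_iff_nontrivial.1 fun _ => h.1 (Subsingleton.elim _ _)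

theorem DiffSimple.eq_bot (h : DiffSimple φ) {I : Ideal R} (hI : I ≤ I.comap φ) (h1 : I ≠ ⊤) :
    I = ⊥ :=
  (h.2 I hI).resolve_right h1

theorem DiffSimple.injective_of_comm (h : DiffSimple φ) (hχ : φ.comp χ = χ.comp φ) :
    Function.Injective χ := by
  have := h.nontrivial
  refine (RingHom.injective_iff_ker_eq_bot χ).2 (h.eq_bot (fun x hx => ?_) (RingHom.ker_ne_top χ))
  rw [RingHom.mem_ker] at hx
  rw [Ideal.mem_comap, RingHom.mem_ker, ← RingHom.comp_apply, ← hχ, RingHom.comp_apply, hx,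
    map_zero]

theorem DiffSimple.exists_mul_eq_one (h : DiffSimple φ) {x : R} (hx : φ x = x) (h0 : x ≠ 0) :
    ∃ y, φ y = y ∧ x * y = 1 := by
  have htop : Ideal.span {x} = ⊤ := by_contra fun hne => h0 <| Ideal.span_singleton_eq_bot.1 <|
    h.eq_bot (Ideal.span_singleton_le_iff_mem _ |>.2 <| by
      rw [Ideal.mem_comap, hx]; exact Ideal.mem_span_singleton_self x) hne
  obtain ⟨y, hy⟩ := isUnit_iff_exists_inv.1 (Ideal.span_singleton_eq_top.1 htop)
  have hφy : x * φ y = 1 := by simpa only [map_mul, map_one, hx] using congrArg φ hy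
  exact ⟨y, (left_inv_eq_right_inv (mul_comm x y ▸ hy) hφy).symm, hy⟩

theorem DiffSimple.eq_zero_of_map_eq_zero (h : DiffSimple φ) {S : Type*} [CommRing S] [Nontrivial S]
    (π : R →+* S) {x : R} (hx : φ x = x) (h0 : π x = 0) : x = 0 := by
  by_contra hne
  obtain ⟨y, -, hy⟩ := h.exists_mul_eq_one hx hne
  simpa [h0] using congrArg π hy

theorem PseudoDomain.finite_minimalPrimes (h : PseudoDomain φ) : (minimalPrimes R).Finite := by
  obtain ⟨d, -, q, hq, -, h0⟩ := h
  refine ((Finset.range d).finite_toSet.image fun i => q.comap (φ ^ i)).subset fun p hp => ?_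
  have hle : (Finset.range d).inf (fun i => q.comap (φ ^ i)) ≤ p := by
    rw [Finset.inf_eq_iInf, ← h0]
    exact bot_le
  obtain ⟨i, hi, hip⟩ := (Ideal.IsPrime.inf_le' hp.1.1).1 hle
  exact ⟨i, hi, hip.antisymm (hp.2 ⟨inferInstance, bot_le⟩ hip)⟩

theorem PseudoPrime.eq_bot_of_forall_isPrime {p : Ideal R} (hp : PseudoPrime φ p)
    (h : ∀ q : Ideal R, q.IsPrime → q = ⊥) : p = ⊥ := by
  obtain ⟨d, hd, q, hq, -, rfl⟩ := hp
  refine eq_bot_iff.2 ((iInf₂_le 0 (Finset.mem_range.2 hd)).trans ?_)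
  rw [pow_zero, h q hq]
  exact fun _ => id

/-- Some minimal prime is invariant under powers of both endomorphisms, which therefore act on its
residue field. -/
theorem exists_residueField_endomorphisms (hsimple : DiffSimple φ) (hdom : PseudoDomain φ)
    (hχ : φ.comp χ = χ.comp φ) :
    ∃ (p : Ideal R) (_ : p.IsPrime) (ψ τ : p.ResidueField →+* p.ResidueField) (m e : ℕ),
      1 ≤ m ∧ 1 ≤ e ∧
        (∀ x, ψ (algebraMap R p.ResidueField x) = algebraMap R p.ResidueField ((φ ^ m) x)) ∧
        ∀ x, τ (algebraMap R p.ResidueField x) = algebraMap R p.ResidueField ((χ ^ e) x) := by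
  have := hsimple.nontrivial
  obtain ⟨p, hp⟩ := Ideal.nonempty_minimalPrimes (bot_ne_top : (⊥ : Ideal R) ≠ ⊤)
  have : p.IsPrime := hp.1.1
  obtain ⟨m, hm, hpm⟩ := exists_comap_pow_eq_of_mem_minimalPrimes hdom.finite_minimalPrimes φ
    (hsimple.injective_of_comm rfl) hp
  obtain ⟨e, he, hpe⟩ := exists_comap_pow_eq_of_mem_minimalPrimes hdom.finite_minimalPrimes χ
    (hsimple.injective_of_comm hχ) hp
  exact ⟨p, this, Ideal.ResidueField.map p p (φ ^ m) hpm.symm,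
    Ideal.ResidueField.map p p (χ ^ e) hpe.symm, m, e, hm, he,
    Ideal.ResidueField.map_algebraMap p p _ _, Ideal.ResidueField.map_algebraMap p p _ _⟩

end DiffSimple

/-- The subfield of `φ`-constants of `K`, over which `φ` is linear. -/
abbrev constantField {K : Type*} [Field K] (φ : K →+* K) : Subfield K :=
  φ.eqLocusField (RingHom.id K)

section Constants

variable {k K R M : Type*} [Field k] [Field K] [CommRing R] [Field M] [Algebra k K] [Algebra k R]
  [Algebra K R] [IsScalarTower k K R] [Algebra k M] [Algebra K M] [IsScalarTower k K M]
  {φ : K →ₐ[k] K} {Φ : R →ₐ[k] R} {σ : K →+* K} {s : R →+* R} {π : R →ₐ[K] M} {ψ τ : M →+* M}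
  {m : ℕ} {z : ℕ → R} {P : ℕ}
  (hfix : ∀ (m : ℕ) a, 1 ≤ m → (φ ^ m) a = a → a ∈ range (algebraMap k K))
  (hΦ : ∀ a, Φ (algebraMap K R a) = algebraMap K R (φ a)) (hsimple : DiffSimple (Φ : R →+* R))
  (hs : ∀ a, s (algebraMap K R a) = algebraMap K R (σ a))
  (hψ : ∀ x, ψ (π x) = π (Φ^[m] x)) (hτ : ∀ x, τ (π x) = π (s x)) (hm : 1 ≤ m) (hP : 1 ≤ P)
  (hz : ∀ n, s (z n) = z (n + P)) (hgen : Algebra.adjoin K (range z) = ⊤)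

omit [IsScalarTower k K R] [Algebra k M] [IsScalarTower k K M] in
include hΦ hψ in
theorem map_algebraMap_eq_algebraMap_pow (a : K) :
    ψ (algebraMap K M a) = algebraMap K M ((φ ^ m) a) := by
  rw [← π.commutes, hψ, ← π.commutes, AlgHom.coe_pow,
    Function.Semiconj.iterate_right (f := algebraMap K R) (fun a => (hΦ a).symm) m a]

include hs hτ in
theorem map_algebraMap_eq_algebraMap (a : K) :
    τ (algebraMap K M a) = algebraMap K M (σ a) := by
  rw [← π.commutes, hτ, hs, π.commutes]

include hgen in
theorem map_mem_adjoin_range_comp (x : R) : π x ∈ Algebra.adjoin K (range (π ∘ z)) := by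
  rw [range_comp, ← AlgHom.map_adjoin, hgen]
  exact ⟨x, trivial, rfl⟩

include hsimple in
theorem inv_mem_map_equalizer {y : M}
    (hy : y ∈ (AlgHom.equalizer Φ (AlgHom.id k R)).map (π.restrictScalars k)) :
    y⁻¹ ∈ (AlgHom.equalizer Φ (AlgHom.id k R)).map (π.restrictScalars k) := by
  obtain ⟨x, hx, rfl⟩ := hy
  obtain rfl | h0 := eq_or_ne x 0
  · exact ⟨0, zero_mem _, by simp⟩
  · obtain ⟨y, hy, hxy⟩ := hsimple.exists_mul_eq_one hx h0
    exact ⟨y, hy, eq_inv_of_mul_eq_one_right (by simp [← map_mul, hxy])⟩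

theorem exists_map_eq_div_of_mem_adjoin_image (f : R →ₐ[k] M) {O : Set R} {y : M}
    (hy : y ∈ IntermediateField.adjoin k (f '' O)) :
    ∃ a ∈ Algebra.adjoin k O, ∃ b ∈ Algebra.adjoin k O, y = f a / f b := by
  obtain ⟨_, ha, _, hb, h⟩ := IntermediateField.mem_adjoin_iff_div.1 hy
  rw [← AlgHom.map_adjoin] at ha hb
  obtain ⟨a, ha, rfl⟩ := ha
  obtain ⟨b, hb, rfl⟩ := hb
  exact ⟨a, ha, b, hb, h⟩

omit [Algebra k K] [IsScalarTower k K R] [Algebra k M] [IsScalarTower k K M] in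
include hsimple hgen in
theorem eq_bot_of_valuation_lt_one {A : Subalgebra k R} (hA : ∀ a ∈ A, Φ a = a) {q : Ideal A}
    {V : ValuationSubring M} (hKV : ∀ a, algebraMap K M a ∈ V) (hzV : ∀ n, π (z n) ∈ V)
    (hqV : ∀ a ∈ q, V.valuation (π a) < 1) : q = ⊥ := by
  have hV (x : R) : π x ∈ V :=
    mem_of_mem_adjoin hKV (range_subset_iff.2 hzV) (map_mem_adjoin_range_comp hgen x)
  have hle : q.map A.val ≤
      (IsLocalRing.maximalIdeal V).comap ((π : R →+* M).codRestrict V.toSubring hV) :=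
    Ideal.map_le_iff_le_comap.2 fun a ha => V.valuation_lt_one_iff _ |>.2 (hqV a ha)
  have hbot : q.map A.val = ⊥ := by
    refine hsimple.eq_bot (Ideal.map_le_iff_le_comap.2 fun a ha => ?_)
      (ne_top_of_le_ne_top (Ideal.comap_ne_top _ (Ideal.IsPrime.ne_top inferInstance)) hle)
    rw [Ideal.mem_comap, Ideal.mem_comap]
    exact (hA a a.2).symm ▸ Ideal.mem_map_of_mem A.val ha
  exact (Ideal.map_eq_bot_iff_of_injective Subtype.val_injective).1 hbot

include hfix hΦ hsimple hs hψ hτ hm hP hz hgen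

theorem exists_finset_forall_mul_mem_adjoin (hsΦ : ∀ x, Φ x = x → Φ (s x) = s x) :
    ∃ S : Finset R, (∀ x ∈ S, Φ x = x) ∧ ∀ x, Φ x = x →
      ∃ a ∈ Algebra.adjoin k (forwardOrbit s S), ∃ b ∈ Algebra.adjoin k (forwardOrbit s S),
        b ≠ 0 ∧ x * b = a := by
  classical
  have := hsimple.nontrivial
  let C := AlgHom.equalizer Φ (AlgHom.id k R)
  let L := (C.map (π.restrictScalars k)).toIntermediateField fun _ => inv_mem_map_equalizer hsimple
  obtain ⟨T, hTL, hT⟩ := exists_finset_le_adjoin_forwardOrbit (φ ^ m) (fun a => hfix m a hm) ψ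
    (map_algebraMap_eq_algebraMap_pow hΦ hψ) τ (map_algebraMap_eq_algebraMap hs hτ) (L := L)
    (by
      rintro _ ⟨x, hx, rfl⟩
      exact (hψ x).trans (congrArg π (Function.iterate_fixed hx m)))
    (by
      rintro _ ⟨x, hx, rfl⟩
      exact ⟨s x, hsΦ x hx, (hτ x).symm⟩)
    hP (z := π ∘ z) (fun n => by simp [hτ, hz])
    (by
      rintro _ ⟨x, -, rfl⟩
      exact IntermediateField.algebra_adjoin_le_adjoin K _ (map_mem_adjoin_range_comp hgen x))
  obtain ⟨S, hS, rfl⟩ :=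
    Finset.subset_set_image_iff.1 (show (T : Set M) ⊆ π '' {x | Φ x = x} from hTL)
  have hSC : Algebra.adjoin k (forwardOrbit s S) ≤ C :=
    Algebra.adjoin_le (forwardOrbit.subset_of_mapsTo (T := (C : Set R)) (fun x hx => hsΦ x hx) hS)
  refine ⟨S, hS, fun x hx => ?_⟩
  have hπx := hT ⟨x, hx, rfl⟩
  rw [Finset.coe_image, forwardOrbit.image fun x => (hτ x).symm] at hπx
  obtain ⟨a, ha, b, hb, hdiv⟩ := exists_map_eq_div_of_mem_adjoin_image (π.restrictScalars k) hπx
  have hinj {y : R} (hy : y ∈ C) (h0 : π y = 0) : y = 0 :=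
    hsimple.eq_zero_of_map_eq_zero (π : R →+* M) hy h0
  obtain rfl | hb0 := eq_or_ne b 0
  · exact ⟨0, zero_mem _, 1, one_mem _, one_ne_zero, by
      rw [hinj hx (by simpa using hdiv), zero_mul]⟩
  · refine ⟨a, ha, b, hb, hb0, sub_eq_zero.1 (hinj (sub_mem (mul_mem hx (hSC hb)) (hSC ha)) ?_)⟩
    have hπb : π b ≠ 0 := fun h => hb0 (hinj (hSC hb) h)
    rw [map_sub, map_mul, sub_eq_zero]
    exact (eq_div_iff hπb).1 hdiv

theorem exists_forall_isPrime_eq_bot {ς : k →+* k} (hς : Function.Surjective ς)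
    (hσς : σ.comp (algebraMap k K) = (algebraMap k K).comp ς) {A : Subalgebra k R}
    (hA : ∀ a ∈ A, Φ a = a) {α : A →+* A} (hα : ∀ a, (α a : R) = s a) :
    ∃ b : A, b ≠ 0 ∧ ∀ q : Ideal A, q.IsPrime → (∀ n, α^[n] b ∉ q) → q = ⊥ := by
  have hinj : Function.Injective ((π.restrictScalars k).comp A.val) :=
    (injective_iff_map_eq_zero _).2 fun a ha =>
      Subtype.ext (hsimple.eq_zero_of_map_eq_zero (π : R →+* M) (hA a a.2) ha)
  have hας : α.comp (algebraMap k A) = (algebraMap k A).comp ς := by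
    ext c
    change (α (algebraMap k A c) : R) = algebraMap k R (ς c)
    calc (α (algebraMap k A c) : R) = s (algebraMap K R (algebraMap k K c)) := by
          rw [hα, ← IsScalarTower.algebraMap_apply k K R]; rfl
      _ = algebraMap K R (algebraMap k K (ς c)) :=
          (hs _).trans (congrArg _ (RingHom.congr_fun hσς c))
      _ = algebraMap k R (ς c) := (IsScalarTower.algebraMap_apply k K R _).symm
  obtain ⟨b, hb, h⟩ := exists_forall_prime_exists_valuationSubring_of_fixed hσς hας hς (φ ^ m)
    (fun l a hl ha => hfix (m * l) a (Nat.mul_pos hm hl) (by rwa [pow_mul])) ψ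
    (map_algebraMap_eq_algebraMap_pow hΦ hψ)
    (j := (π.restrictScalars k).comp A.val)
    (fun a => (hψ a).trans (congrArg π (Function.iterate_fixed (hA a a.2) m))) hinj τ
    (map_algebraMap_eq_algebraMap hs hτ)
    (fun a => (hτ a).trans (congrArg π (hα a).symm)) hP (z := π ∘ z) (fun n => by simp [hτ, hz])
  refine ⟨b, hb, fun q _ hq => ?_⟩
  obtain ⟨V, hKV, hzV, hqV⟩ := h q hq
  exact eq_bot_of_valuation_lt_one hsimple hgen hA hKV hzV hqV

end Constants

theorem mapsTo_fixedPoints_of_comp_eq {R : Type*} [NonAssocSemiring R] {f g : R →+* R}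
    (h : f.comp g = g.comp f) : MapsTo g (Function.fixedPoints f) (Function.fixedPoints f) :=
  fun _ hx => Function.IsFixedPt.map hx fun y => (RingHom.congr_fun h y).symm

section UnitFractions

variable {R : Type*} [CommRing R] {A B : Subring R}

/-- The subring of the fractions `a / u` with `a` and `u` in `A` and `u` invertible in `R`. -/
def unitFractions (A : Subring R) : Subring R where
  carrier := {v | ∃ u ∈ A, IsUnit u ∧ v * u ∈ A}
  zero_mem' := ⟨1, one_mem A, isUnit_one, by rw [zero_mul]; exact zero_mem A⟩
  one_mem' := ⟨1, one_mem A, isUnit_one, by rw [one_mul]; exact one_mem A⟩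
  neg_mem' := fun ⟨u, hu, hunit, hvu⟩ => ⟨u, hu, hunit, by rw [neg_mul]; exact neg_mem hvu⟩
  add_mem' := by
    rintro v w ⟨u, hu, hunit, hvu⟩ ⟨t, ht, htunit, hwt⟩
    refine ⟨u * t, mul_mem hu ht, hunit.mul htunit, ?_⟩
    rw [show (v + w) * (u * t) = v * u * t + w * t * u by ring]
    exact add_mem (mul_mem hvu ht) (mul_mem hwt hu)
  mul_mem' := by
    rintro v w ⟨u, hu, hunit, hvu⟩ ⟨t, ht, htunit, hwt⟩
    refine ⟨u * t, mul_mem hu ht, hunit.mul htunit, ?_⟩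
    rw [mul_mul_mul_comm]
    exact mul_mem hvu hwt

theorem le_unitFractions : A ≤ unitFractions A :=
  fun a ha => ⟨1, one_mem A, isUnit_one, (mul_one a).symm ▸ ha⟩

theorem mem_unitFractions_of_mul_eq_one {b c : R} (hb : b ∈ A) (hbc : b * c = 1) :
    c ∈ unitFractions A :=
  ⟨b, hb, .of_mul_eq_one c hbc, by rw [mul_comm, hbc]; exact one_mem A⟩

theorem eq_bot_of_comap_inclusion_eq_bot (hAB : A ≤ B) (hB : B ≤ unitFractions A) {q : Ideal B}
    (hq : q.comap (Subring.inclusion hAB) = ⊥) : q = ⊥ := by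
  refine eq_bot_iff.2 fun v hv => ?_
  obtain ⟨u, hu, hunit, hvu⟩ := hB v.2
  have hmem : (⟨v * u, hvu⟩ : A) ∈ q.comap (Subring.inclusion hAB) :=
    q.mul_mem_right ⟨u, hAB hu⟩ hv
  rw [hq] at hmem
  exact Subtype.ext (hunit.mul_left_eq_zero.1 (congrArg Subtype.val hmem))

end UnitFractions

section genSubring

variable {K R : Type*} [CommRing K] [CommRing R] [Algebra K R] {φ σ : K →+* K} {Φ σ' : R →+* R}
  {X Y : Set R}

theorem algebraMap_mem_genSubring {a : K} (ha : φ a = a) : algebraMap K R a ∈ genSubring φ σ' X :=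
  Subring.subset_closure (Or.inl ⟨a, ha, rfl⟩)

theorem forwardOrbit_subset_genSubring : forwardOrbit σ' X ⊆ genSubring φ σ' X :=
  fun _ hx => Subring.subset_closure (Or.inr hx)

theorem genSubring_le {B : Subring R} (hK : ∀ a, φ a = a → algebraMap K R a ∈ B)
    (hX : forwardOrbit σ' X ⊆ B) : genSubring φ σ' X ≤ B :=
  Subring.closure_le.2 (union_subset (by rintro _ ⟨a, ha, rfl⟩; exact hK a ha) hX)

theorem genSubring_mono (h : X ⊆ Y) : genSubring φ σ' X ≤ genSubring φ σ' Y :=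
  Subring.closure_mono (union_subset_union_right _ (forwardOrbit.mono h))

theorem map_eq_of_mem_genSubring (hΦ : ∀ a, Φ (algebraMap K R a) = algebraMap K R (φ a))
    (hcomm : Φ.comp σ' = σ'.comp Φ) (hX : ∀ x ∈ X, Φ x = x) {x : R}
    (hx : x ∈ genSubring φ σ' X) : Φ x = x :=
  genSubring_le (B := Φ.eqLocus (RingHom.id R)) (fun a ha => (hΦ a).trans (congrArg _ ha))
    (forwardOrbit.subset_of_mapsTo (mapsTo_fixedPoints_of_comp_eq hcomm) hX) hx

theorem mapsTo_genSubring (hcomm : φ.comp σ = σ.comp φ)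
    (hσ : ∀ a, σ' (algebraMap K R a) = algebraMap K R (σ a)) :
    MapsTo σ' (genSubring φ σ' X) (genSubring φ σ' X) :=
  genSubring_le (B := (genSubring φ σ' X).comap σ')
    (fun a ha => by
      rw [Subring.mem_comap, hσ]
      exact algebraMap_mem_genSubring (mapsTo_fixedPoints_of_comp_eq hcomm ha))
    fun _ hx => forwardOrbit_subset_genSubring (forwardOrbit.mapsTo hx)

theorem genSubring_union_singleton_le_unitFractions
    (hσ' : MapsTo σ' (genSubring φ σ' X) (genSubring φ σ' X)) {b c : R}
    (hb : b ∈ genSubring φ σ' X) (hbc : b * c = 1) :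
    genSubring φ σ' (X ∪ {c}) ≤ unitFractions (genSubring φ σ' X) := by
  refine genSubring_le (fun a ha => le_unitFractions (algebraMap_mem_genSubring ha)) ?_
  rintro _ ⟨x, hx | rfl, n, rfl⟩
  · exact le_unitFractions (forwardOrbit_subset_genSubring ⟨x, hx, n, rfl⟩)
  · refine mem_unitFractions_of_mul_eq_one (hσ'.iterate n hb) ?_
    rw [← iterate_map_mul, hbc, iterate_map_one]

/-- `genSubring` as an algebra over the constants. -/
def genSubalgebra {K R : Type*} [Field K] [CommRing R] [Algebra K R] (φ : K →+* K) (σ' : R →+* R)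
    (X : Set R) : Subalgebra (constantField φ) R :=
  { genSubring φ σ' X with algebraMap_mem' := fun c => algebraMap_mem_genSubring c.2 }

end genSubring

section SigmaGenerated

variable {K R M : Type*} [Field K] [CommRing R] [Field M] [Algebra K R] [Algebra K M]
  {φ σ : K →+* K} {Φ σ' : R →+* R} {π : R →ₐ[K] M} {ψ τ : M →+* M} {m e P : ℕ} {z : ℕ → R}
  {X : Set R} (hcomm : φ.comp σ = σ.comp φ)
  (hper : ∀ (a : K) (m : ℕ), 1 ≤ m → φ^[m] a = a → φ a = a)
  (honto : ∀ a : K, φ a = a → ∃ b : K, φ b = b ∧ σ b = a) (hcommR : Φ.comp σ' = σ'.comp Φ)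
  (hΦ : ∀ a : K, Φ (algebraMap K R a) = algebraMap K R (φ a))
  (hσ : ∀ a : K, σ' (algebraMap K R a) = algebraMap K R (σ a)) (hsimple : DiffSimple Φ)
  (hψ : ∀ x, ψ (π x) = π (Φ^[m] x)) (hτ : ∀ x, τ (π x) = π ((σ' ^ e) x)) (hm : 1 ≤ m)
  (hP : 1 ≤ P) (hz : ∀ n, (σ' ^ e) (z n) = z (n + P)) (hgen : Algebra.adjoin K (range z) = ⊤)

/-- `Φ` as a map that is linear over the constants of the base field. -/
def constantAlgHom (Φ : R →+* R) (hΦ : ∀ a, Φ (algebraMap K R a) = algebraMap K R (φ a)) :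
    R →ₐ[constantField φ] R :=
  { Φ with commutes' := fun c => (hΦ c).trans (congrArg _ c.2) }

include hper in
theorem mem_range_algebraMap_of_constantAlgHom_pow (m : ℕ) (a : K) (hm : 1 ≤ m)
    (ha : (constantAlgHom (K := K) φ (fun _ => rfl) ^ m) a = a) :
    a ∈ range (algebraMap (constantField φ) K) := by
  rw [AlgHom.coe_pow] at ha
  exact ⟨⟨a, hper a m hm ha⟩, rfl⟩

include hcomm honto in
theorem exists_surjective_pow_comp_algebraMap (e : ℕ) :
    ∃ ς : constantField φ →+* constantField φ, Function.Surjective ς ∧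
      (σ ^ e).comp (algebraMap (constantField φ) K) = (algebraMap (constantField φ) K).comp ς := by
  let ς : constantField φ →+* constantField φ :=
    σ.restrict _ _ (mapsTo_fixedPoints_of_comp_eq hcomm)
  have hς : Function.Surjective ς := by
    rintro ⟨a, ha⟩
    obtain ⟨b, hb, rfl⟩ := honto a ha
    exact ⟨⟨b, hb⟩, rfl⟩
  refine ⟨ς ^ e, RingHom.coe_pow ς e ▸ hς.iterate e, RingHom.ext fun c => ?_⟩
  simp only [RingHom.comp_apply, RingHom.coe_pow]
  exact (Function.Semiconj.iterate_right (f := algebraMap (constantField φ) K) (ga := ς) (gb := σ)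
    (fun _ => rfl) e c).symm

include hσ in
theorem pow_algebraMap_eq_algebraMap_pow (e : ℕ) (a : K) :
    (σ' ^ e) (algebraMap K R a) = algebraMap K R ((σ ^ e) a) := by
  simp only [RingHom.coe_pow]
  exact (Function.Semiconj.iterate_right (f := algebraMap K R) (fun a => (hσ a).symm) e a).symm

include hper hcommR hΦ hσ hsimple hψ hτ hm hP hz hgen

theorem exists_finset_forall_mul_mem_genSubring :
    ∃ S : Finset R, (∀ s ∈ S, Φ s = s) ∧ ∀ x, Φ x = x → ∃ a b,
      a ∈ genSubring φ σ' (S : Set R) ∧ b ∈ genSubring φ σ' (S : Set R) ∧ b ≠ 0 ∧ x * b = a := by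
  obtain ⟨S, hS, h⟩ := exists_finset_forall_mul_mem_adjoin (Φ := constantAlgHom Φ hΦ) (π := π)
    (mem_range_algebraMap_of_constantAlgHom_pow hper) hΦ hsimple
    (pow_algebraMap_eq_algebraMap_pow hσ e) hψ hτ hm hP hz hgen (fun x hx => by
      rw [RingHom.coe_pow]
      exact (mapsTo_fixedPoints_of_comp_eq hcommR).iterate e hx)
  have hle : Algebra.adjoin (constantField φ) (forwardOrbit (σ' ^ e) S) ≤ genSubalgebra φ σ' S :=
    Algebra.adjoin_le ((forwardOrbit.subset_of_mapsTo
      (by rw [RingHom.coe_pow]; exact forwardOrbit.mapsTo.iterate e) forwardOrbit.subset).trans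
        forwardOrbit_subset_genSubring)
  refine ⟨S, hS, fun x hx => ?_⟩
  obtain ⟨a, ha, b, hb, h⟩ := h x hx
  exact ⟨a, b, hle ha, hle hb, h⟩

include hcomm honto in
theorem exists_mul_eq_one_forall_isPrime_genSubring_eq_bot (hX : ∀ x ∈ X, Φ x = x) :
    ∃ b c : R, Φ b = b ∧ Φ c = c ∧ b * c = 1 ∧ b ≠ 0 ∧
      ∀ q : Ideal (genSubring φ σ' (X ∪ {c})), q.IsPrime → q = ⊥ := by
  have hfix : ∀ a ∈ genSubalgebra φ σ' X, Φ a = a :=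
    fun _ => map_eq_of_mem_genSubring hΦ hcommR hX
  have hmaps (Y : Set R) : MapsTo (σ' ^ e) (genSubring φ σ' Y) (genSubring φ σ' Y) := by
    rw [RingHom.coe_pow]
    exact (mapsTo_genSubring hcomm hσ).iterate e
  let α := (σ' ^ e).restrict (genSubalgebra φ σ' X) (genSubalgebra φ σ' X) (hmaps X)
  obtain ⟨ς, hς, hσς⟩ := exists_surjective_pow_comp_algebraMap hcomm honto e
  obtain ⟨b, hb, h⟩ := exists_forall_isPrime_eq_bot (Φ := constantAlgHom Φ hΦ) (π := π)
    (mem_range_algebraMap_of_constantAlgHom_pow hper) hΦ hsimple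
    (pow_algebraMap_eq_algebraMap_pow hσ e) hψ hτ hm hP hz hgen hς hσς hfix (α := α) fun _ => rfl
  have hb0 : (b : R) ≠ 0 := fun h0 => hb (Subtype.ext h0)
  obtain ⟨c, hc, hbc⟩ := hsimple.exists_mul_eq_one (hfix b b.2) hb0
  have hle : genSubring φ σ' X ≤ genSubring φ σ' (X ∪ {c}) := genSubring_mono subset_union_left
  have hunit (n : ℕ) : IsUnit (Subring.inclusion hle (α^[n] b)) := by
    have hαb : ((α^[n] b : genSubalgebra φ σ' X) : R) = (σ' ^ e)^[n] b :=
      Function.Semiconj.iterate_right (f := Subtype.val) (fun _ => rfl) n b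
    refine .of_mul_eq_one ⟨(σ' ^ e)^[n] c, (hmaps _).iterate n ?_⟩ (Subtype.ext ?_)
    · exact forwardOrbit_subset_genSubring (forwardOrbit.subset (mem_union_right X rfl))
    · exact (congrArg (· * _) hαb).trans
        (by rw [← iterate_map_mul, hbc, iterate_map_one, Subring.coe_one])
  exact ⟨b, c, hfix b b.2, hc, hbc, hb0, fun q hq => eq_bot_of_comap_inclusion_eq_bot hle
    (genSubring_union_singleton_le_unitFractions (mapsTo_genSubring hcomm hσ) b.2 hbc)
    (h (q.comap (Subring.inclusion hle)) (hq.comap _) fun n hn =>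
      hq.ne_top (q.eq_top_of_isUnit_mem hn (hunit n)))⟩

end SigmaGenerated

/-- New `φ`-constants are constrained: let `K` be a `φσ`-field with `K^{φ^∞} = K^φ` and
`σ : K^φ → K^φ` surjective, and let `R` be a `φ`-simple `K`-`φσ`-algebra that is a
`φ`-pseudo domain and finitely `σ`-generated over `K`.  Then `R^Φ` is a `σ`-field which is
finitely `σ`-generated and constrained over `k = K^φ`. -/
theorem constants_constrained_of_finitely_sigma_generated
    {K R : Type*} [Field K] [CommRing R] [Algebra K R]
    (φ σ : K →+* K) (hcomm : φ.comp σ = σ.comp φ)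
    (hper : ∀ (a : K) (m : ℕ), 1 ≤ m → (⇑φ)^[m] a = a → φ a = a)
    (honto : ∀ a : K, φ a = a → ∃ b : K, φ b = b ∧ σ b = a)
    (Φ σ' : R →+* R) (hcommR : Φ.comp σ' = σ'.comp Φ)
    (hΦ : ∀ a : K, Φ (algebraMap K R a) = algebraMap K R (φ a))
    (hσ : ∀ a : K, σ' (algebraMap K R a) = algebraMap K R (σ a))
    (hsimple : DiffSimple Φ) (hdom : PseudoDomain Φ)
    (hfin : ∃ T : Finset R,
      Algebra.adjoin K {x : R | ∃ t ∈ T, ∃ n : ℕ, (⇑σ')^[n] t = x} = ⊤) :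
    -- (1) `R^Φ` is a field, stable under `σ'`
    ((0 : R) ≠ 1 ∧ ∀ x : R, Φ x = x → x ≠ 0 → ∃ y : R, Φ y = y ∧ x * y = 1) ∧
    (∀ x : R, Φ x = x → Φ (σ' x) = σ' x) ∧
    -- (2) `R^Φ` is finitely `σ`-generated as a `σ`-field extension of `k`
    (∃ S : Finset R, (∀ s ∈ S, Φ s = s) ∧
      ∀ x : R, Φ x = x → ∃ a b : R,
        a ∈ genSubring φ σ' (↑S : Set R) ∧ b ∈ genSubring φ σ' (↑S : Set R) ∧
        b ≠ 0 ∧ x * b = a) ∧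
    -- (3) `R^Φ` is constrained over `k`
    (∀ (m : ℕ) (c : Fin m → R), (∀ j, Φ (c j) = c j) →
      ∃ b binv : R, Φ b = b ∧ Φ binv = binv ∧ b * binv = 1 ∧ b ≠ 0 ∧
        ∃ σV : ↥(genSubring φ σ' (Set.range c ∪ {binv})) →+*
               ↥(genSubring φ σ' (Set.range c ∪ {binv})),
          (∀ v : ↥(genSubring φ σ' (Set.range c ∪ {binv})), ((σV v : R)) = σ' ↑v) ∧
          ∀ p : Ideal ↥(genSubring φ σ' (Set.range c ∪ {binv})),
            PseudoPrime σV p → p = ⊥) := by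
  have := hsimple.nontrivial
  obtain ⟨p, _, ψ, τ, m, e, hm, he, hψ, hτ⟩ := exists_residueField_endomorphisms hsimple hdom hcommR
  obtain ⟨T, hT⟩ := hfin
  obtain ⟨z, N, hN, hz, hTz⟩ := forwardOrbit.exists_subset_range σ' T.finite_toSet
  have hze (n : ℕ) : (σ' ^ e) (z n) = z (n + e * N) := by
    rw [RingHom.coe_pow, iterate_apply_of_apply_eq_add hz]
  have hgen : Algebra.adjoin K (Set.range z) = ⊤ :=
    top_le_iff.1 (hT.ge.trans (Algebra.adjoin_mono hTz))
  let π : R →ₐ[K] p.ResidueField := IsScalarTower.toAlgHom K R _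
  have hπψ (x : R) : ψ (π x) = π (Φ^[m] x) := (hψ x).trans (by rw [RingHom.coe_pow]; rfl)
  refine ⟨⟨zero_ne_one, fun _ => hsimple.exists_mul_eq_one⟩,
    fun _ hx => mapsTo_fixedPoints_of_comp_eq hcommR hx,
    exists_finset_forall_mul_mem_genSubring hper hcommR hΦ hσ hsimple hπψ (π := π) hτ hm
      (Nat.mul_pos he hN) hze hgen, fun n c hc => ?_⟩
  obtain ⟨b, b', hb, hb', hbb', hb0, h⟩ :=
    exists_mul_eq_one_forall_isPrime_genSubring_eq_bot hcomm hper honto hcommR hΦ hσ hsimple hπψ hτ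
      hm (Nat.mul_pos he hN) hze hgen (Set.forall_mem_range.2 hc)
  exact ⟨b, b', hb, hb', hbb', hb0, σ'.restrict _ _ (mapsTo_genSubring hcomm hσ), fun _ => rfl,
    fun q hq => hq.eq_bot_of_forall_isPrime h⟩
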